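/- Let σ ∈ (1/2, 1) and 0 < α < 2σ − 1. Suppose u : R^n → R is continuous, |u(x)| ≤ 1 + |x|^{1+α} for all x, and u satisfies (−Δ)^σ u = 0 in R^n in the viscosity sense. Then u is an affine function. -/

import Mathlib

open MeasureTheory Metric Filter Set
open scoped RealInnerProductSpace Topology

/-- The truncated integral whose limit as `δ → 0⁺` is the principal value of
`Δ^σ u (y) = p.v. ∫ (u(x) − u(y)) |x − y|^{-(n+2σ)} dx`. -/
noncomputable def truncatedFracLap (n : ℕ) (σ : ℝ) (u : EuclideanSpace ℝ (Fin n) → ℝ)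
    (y : EuclideanSpace ℝ (Fin n)) (δ : ℝ) : ℝ :=
  ∫ x in {x : EuclideanSpace ℝ (Fin n) | δ ≤ dist x y},
    (u x - u y) / dist x y ^ ((n : ℝ) + 2 * σ)

/-- `φ` is a smooth function touching `u` from below at `y` (locally). -/
def TouchesBelow (n : ℕ) (u φ : EuclideanSpace ℝ (Fin n) → ℝ)
    (y : EuclideanSpace ℝ (Fin n)) : Prop :=
  ContDiff ℝ (⊤ : ℕ∞) φ ∧ φ y = u y ∧ ∃ r > (0:ℝ), ∀ x ∈ ball y r, φ x ≤ u x

/-- `φ` is a smooth function touching `u` from above at `y` (locally). -/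
def TouchesAbove (n : ℕ) (u φ : EuclideanSpace ℝ (Fin n) → ℝ)
    (y : EuclideanSpace ℝ (Fin n)) : Prop :=
  ContDiff ℝ (⊤ : ℕ∞) φ ∧ φ y = u y ∧ ∃ r > (0:ℝ), ∀ x ∈ ball y r, u x ≤ φ x


namespace FracLiou

/-- Heat kernel at time `t`. -/
noncomputable def Gk (n : ℕ) (t : ℝ) (z : EuclideanSpace ℝ (Fin n)) : ℝ :=
  (2 * Real.pi * t) ^ (-(n : ℝ) / 2) * Real.exp (-‖z‖ ^ 2 / (2 * t))

/-- Heat extension of `w`. -/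
noncomputable def HU (n : ℕ) (w : EuclideanSpace ℝ (Fin n) → ℝ) (t : ℝ)
    (x : EuclideanSpace ℝ (Fin n)) : ℝ := ∫ y, w (x + y) * Gk n t y

/-- Measurable functions of growth `p`. -/
def Gr (n : ℕ) (p A : ℝ) (w : EuclideanSpace ℝ (Fin n) → ℝ) : Prop :=
  Measurable w ∧ ∀ x, |w x| ≤ A * (1 + ‖x‖ ^ p)

variable {n : ℕ}

lemma Gk_pos {t : ℝ} (ht : 0 < t) (z : EuclideanSpace ℝ (Fin n)) : 0 < Gk n t z := by
  unfold Gk; positivity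

lemma Gk_neg (t : ℝ) (z : EuclideanSpace ℝ (Fin n)) : Gk n t (-z) = Gk n t z := by
  simp [Gk]

lemma Gk_measurable : Measurable (fun q : ℝ × EuclideanSpace ℝ (Fin n) => Gk n q.1 q.2) := by
  unfold Gk; fun_prop

lemma Gk_measurable' (t : ℝ) : Measurable (Gk n t) := by
  unfold Gk; fun_prop

lemma integrable_exp_sq {b : ℝ} (hb : 0 < b) :
    Integrable (fun v : EuclideanSpace ℝ (Fin n) => Real.exp (-b * ‖v‖ ^ 2)) := by
  by_contra h
  have h1 := GaussianFourier.integral_rexp_neg_mul_sq_norm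
    (V := EuclideanSpace ℝ (Fin n)) hb
  rw [integral_undef h] at h1
  have : 0 < (Real.pi / b) ^ ((Module.finrank ℝ (EuclideanSpace ℝ (Fin n)) : ℝ) / 2) := by
    positivity
  linarith

lemma Gk_eq (t : ℝ) (z : EuclideanSpace ℝ (Fin n)) :
    Gk n t z = (2 * Real.pi * t) ^ (-(n : ℝ) / 2) * Real.exp (-(1 / (2 * t)) * ‖z‖ ^ 2) := by
  unfold Gk; congr 2; ring

lemma Gk_integrable {t : ℝ} (ht : 0 < t) : Integrable (Gk n t) := by
  have := (integrable_exp_sq (n := n) (b := 1 / (2 * t)) (by positivity)).const_mul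
    ((2 * Real.pi * t) ^ (-(n : ℝ) / 2))
  exact this.congr (Eventually.of_forall fun z => (Gk_eq t z).symm)

lemma Gk_integral {t : ℝ} (ht : 0 < t) : ∫ z, Gk n t z = 1 := by
  simp_rw [Gk_eq]
  rw [integral_const_mul, GaussianFourier.integral_rexp_neg_mul_sq_norm (by positivity)]
  rw [finrank_euclideanSpace, Fintype.card_fin]
  have : Real.pi / (1 / (2 * t)) = 2 * Real.pi * t := by field_simp
  rw [this, neg_div, Real.rpow_neg (by positivity)]
  exact inv_mul_cancel₀ (by positivity)

lemma Gk_smul {t : ℝ} (ht : 0 < t) (z : EuclideanSpace ℝ (Fin n)) :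
    Gk n t (√t • z) = (√t ^ n)⁻¹ * Gk n 1 z := by
  unfold Gk
  have h1 : -‖√t • z‖ ^ 2 / (2 * t) = -‖z‖ ^ 2 / (2 * 1) := by
    rw [norm_smul, mul_pow, Real.norm_eq_abs, sq_abs, Real.sq_sqrt ht.le]; field_simp
  have h2 : (√t ^ n)⁻¹ = t ^ (-(n : ℝ) / 2) := by
    rw [Real.sqrt_eq_rpow, ← Real.rpow_natCast, ← Real.rpow_mul ht.le, ← Real.rpow_neg ht.le]
    congr 1; ring
  rw [h1, h2, Real.mul_rpow (by positivity) ht.le]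
  ring_nf

lemma Gk_scale {t : ℝ} (ht : 0 < t) (F : EuclideanSpace ℝ (Fin n) → ℝ) :
    ∫ y, F y * Gk n t y = ∫ z, F (√t • z) * Gk n 1 z := by
  have h := Measure.integral_comp_smul (volume : Measure (EuclideanSpace ℝ (Fin n)))
    (fun y => F y * Gk n t y) (√t)
  simp only [finrank_euclideanSpace, Fintype.card_fin, Gk_smul ht] at h
  have hs : 0 < √t ^ n := by positivity
  rw [abs_of_pos (by positivity), smul_eq_mul] at h
  have h2 : ∫ z, F (√t • z) * ((√t ^ n)⁻¹ * Gk n 1 z) =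
      (√t ^ n)⁻¹ * ∫ z, F (√t • z) * Gk n 1 z := by
    rw [← integral_const_mul]; congr 1; ext z; ring
  rw [h2] at h
  exact (mul_left_cancel₀ (inv_ne_zero hs.ne') h).symm

lemma Gk_scale_integrable {t : ℝ} (ht : 0 < t) (F : EuclideanSpace ℝ (Fin n) → ℝ) :
    Integrable (fun z => F (√t • z) * Gk n 1 z) ↔ Integrable (fun y => F y * Gk n t y) := by
  have hst : √t ≠ 0 := by positivity
  rw [← integrable_comp_smul_iff volume (fun y => F y * Gk n t y) hst]
  have hs : 0 < √t ^ n := by positivity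
  have : (fun z => F (√t • z) * Gk n t (√t • z)) =
      fun z => (√t ^ n)⁻¹ * (F (√t • z) * Gk n 1 z) := by
    ext z; rw [Gk_smul ht]; ring
  rw [this]
  exact (integrable_const_mul_iff (IsUnit.mk0 _ (inv_ne_zero hs.ne')) _).symm

lemma rpow_le_one_add_sq {r p : ℝ} (hr : 0 ≤ r) (hp : 0 < p) (hp2 : p < 2) :
    r ^ p ≤ 1 + r ^ 2 := by
  rcases le_total r 1 with h | h
  · have := Real.rpow_le_one hr h hp.le; nlinarith [sq_nonneg r]
  · have : r ^ p ≤ r ^ (2 : ℝ) := Real.rpow_le_rpow_of_exponent_le h hp2.le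
    rw [Real.rpow_two] at this; linarith

lemma weight_integrable {p : ℝ} (hp : 0 < p) (hp2 : p < 2) {t : ℝ} (ht : 0 < t) :
    Integrable (fun z : EuclideanSpace ℝ (Fin n) =>
      ((1 + ‖z‖ ^ p) * (1 + ‖z‖ ^ 2)) * Gk n t z) := by
  set b := 1 / (2 * t) with hb
  have hb0 : 0 < b := by positivity
  -- (1+r^2) ≤ (1+4/b) exp(b r^2/4)
  have key : ∀ r : ℝ, 0 ≤ r → (1 + r ^ p) * (1 + r ^ 2) ≤
      2 * (1 + 4 / b) ^ 2 * Real.exp (b / 2 * r ^ 2) := by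
    intro r hr
    have h1 := rpow_le_one_add_sq hr hp hp2
    have h2 : 1 + r ^ 2 ≤ (1 + 4 / b) * Real.exp (b / 4 * r ^ 2) := by
      have h3 := Real.add_one_le_exp (b / 4 * r ^ 2)
      have h4 : 1 ≤ Real.exp (b / 4 * r ^ 2) := Real.one_le_exp (by positivity)
      have h5 : r ^ 2 = 4 / b * (b / 4 * r ^ 2) := by field_simp
      have h6 : 4 / b * (b / 4 * r ^ 2) ≤ 4 / b * Real.exp (b / 4 * r ^ 2) :=
        mul_le_mul_of_nonneg_left (by linarith) (by positivity)
      nlinarith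
    have h7 : Real.exp (b / 2 * r ^ 2) = Real.exp (b / 4 * r ^ 2) ^ 2 := by
      rw [← Real.exp_nat_mul]; push_cast; ring_nf
    rw [h7]
    have h8 : (1 + r ^ 2) ^ 2 ≤ ((1 + 4 / b) * Real.exp (b / 4 * r ^ 2)) ^ 2 :=
      pow_le_pow_left₀ (by positivity) h2 2
    have h9 : (1 + r ^ p) ≤ 2 * (1 + r ^ 2) := by nlinarith [sq_nonneg r]
    calc (1 + r ^ p) * (1 + r ^ 2) ≤ 2 * (1 + r ^ 2) * (1 + r ^ 2) :=
          mul_le_mul_of_nonneg_right h9 (by positivity)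
      _ = 2 * (1 + r ^ 2) ^ 2 := by ring
      _ ≤ _ := by rw [mul_pow] at h8; linarith
  have hI := (integrable_exp_sq (n := n) (b := b / 2) (by positivity)).const_mul
    ((2 * (1 + 4 / b) ^ 2) * (2 * Real.pi * t) ^ (-(n : ℝ) / 2))
  refine hI.mono' ?_ (Eventually.of_forall fun z => ?_)
  · refine Measurable.aestronglyMeasurable ?_
    have := Gk_measurable' (n := n) t
    fun_prop
  · rw [Real.norm_of_nonneg (by have := Gk_pos ht z; positivity), Gk_eq]
    have h1 := key ‖z‖ (norm_nonneg _)
    have h2 : Real.exp (-(b / 2) * ‖z‖ ^ 2) =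
        Real.exp (b / 2 * ‖z‖ ^ 2) * Real.exp (-b * ‖z‖ ^ 2) := by
      rw [← Real.exp_add]; ring_nf
    rw [h2]
    have h3 : 0 < (2 * Real.pi * t) ^ (-(n : ℝ) / 2) := by positivity
    calc _ ≤ (2 * (1 + 4 / b) ^ 2 * Real.exp (b / 2 * ‖z‖ ^ 2)) *
          ((2 * Real.pi * t) ^ (-(n : ℝ) / 2) * Real.exp (-b * ‖z‖ ^ 2)) :=
          mul_le_mul_of_nonneg_right h1 (by positivity)
      _ = _ := by ring

/-- The basic moment. -/
noncomputable def Mo (n : ℕ) (p : ℝ) : ℝ :=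
  ∫ z : EuclideanSpace ℝ (Fin n), ((1 + ‖z‖ ^ p) * (1 + ‖z‖ ^ 2)) * Gk n 1 z

lemma Mo_nonneg (p : ℝ) : 0 ≤ Mo n p :=
  integral_nonneg fun z => by have := Gk_pos (n := n) one_pos z; positivity

lemma sqrt_rpow {t : ℝ} (ht : 0 < t) (p : ℝ) : √t ^ p = t ^ (p / 2) := by
  rw [Real.sqrt_eq_rpow, ← Real.rpow_mul ht.le]; congr 1; ring

lemma moment_pointwise {p : ℝ} {t : ℝ} (ht : 0 < t) (z : EuclideanSpace ℝ (Fin n)) :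
    (1 + ‖√t • z‖ ^ p) * (1 + ‖√t • z‖ ^ 2 / t) ≤
      (1 + t ^ (p / 2)) * ((1 + ‖z‖ ^ p) * (1 + ‖z‖ ^ 2)) := by
  rw [norm_smul, Real.norm_of_nonneg (Real.sqrt_nonneg _), Real.mul_rpow (by positivity)
    (by positivity), sqrt_rpow ht, mul_pow, Real.sq_sqrt ht.le]
  have h1 : t * ‖z‖ ^ 2 / t = ‖z‖ ^ 2 := by field_simp
  rw [h1, ← mul_assoc]
  refine mul_le_mul_of_nonneg_right ?_ (by positivity)
  have h2 : 0 ≤ t ^ (p / 2) := by positivity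
  have h3 : 0 ≤ ‖z‖ ^ p := by positivity
  nlinarith

lemma moment_integrable {p : ℝ} (hp : 0 < p) (hp2 : p < 2) {t : ℝ} (ht : 0 < t) :
    Integrable (fun y : EuclideanSpace ℝ (Fin n) =>
      ((1 + ‖y‖ ^ p) * (1 + ‖y‖ ^ 2 / t)) * Gk n t y) := by
  rw [← Gk_scale_integrable ht (fun y => (1 + ‖y‖ ^ p) * (1 + ‖y‖ ^ 2 / t))]
  have hI := (weight_integrable (n := n) hp hp2 one_pos).const_mul (1 + t ^ (p / 2))
  refine hI.mono' ?_ (Eventually.of_forall fun z => ?_)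
  · refine Measurable.aestronglyMeasurable ?_
    have := Gk_measurable' (n := n) 1
    fun_prop
  · have hG := Gk_pos (n := n) one_pos z
    rw [Real.norm_of_nonneg (by positivity), ← mul_assoc]
    exact mul_le_mul_of_nonneg_right (moment_pointwise ht z) hG.le

lemma moment_le {p : ℝ} (hp : 0 < p) (hp2 : p < 2) {t : ℝ} (ht : 0 < t) :
    ∫ y : EuclideanSpace ℝ (Fin n), ((1 + ‖y‖ ^ p) * (1 + ‖y‖ ^ 2 / t)) * Gk n t y
      ≤ (1 + t ^ (p / 2)) * Mo n p := by
  rw [Gk_scale ht (fun y => (1 + ‖y‖ ^ p) * (1 + ‖y‖ ^ 2 / t)), Mo, ← integral_const_mul]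
  refine integral_mono ?_ ((weight_integrable (n := n) hp hp2 one_pos).const_mul _) fun z => ?_
  · exact (Gk_scale_integrable ht (fun y => (1 + ‖y‖ ^ p) * (1 + ‖y‖ ^ 2 / t))).2
      (moment_integrable hp hp2 ht)
  · have hG := Gk_pos (n := n) one_pos z
    simp only
    rw [← mul_assoc]
    exact mul_le_mul_of_nonneg_right (moment_pointwise ht z) hG.le

lemma norm_add_rpow {p : ℝ} (hp : 0 < p) (hp2 : p < 2) (x y : EuclideanSpace ℝ (Fin n)) :
    ‖x + y‖ ^ p ≤ 4 * (‖x‖ ^ p + ‖y‖ ^ p) := by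
  have h1 : ‖x + y‖ ≤ 2 * max ‖x‖ ‖y‖ := by
    have := norm_add_le x y
    have := le_max_left ‖x‖ ‖y‖
    have := le_max_right ‖x‖ ‖y‖
    linarith
  have h2 : ‖x + y‖ ^ p ≤ (2 * max ‖x‖ ‖y‖) ^ p :=
    Real.rpow_le_rpow (norm_nonneg _) h1 hp.le
  rw [Real.mul_rpow (by norm_num) (by positivity)] at h2
  have h3 : (2 : ℝ) ^ p ≤ 4 := by
    have := Real.rpow_le_rpow_of_exponent_le (x := 2) (by norm_num) hp2.le
    rw [Real.rpow_two] at this; linarith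
  have h4 : (max ‖x‖ ‖y‖) ^ p ≤ ‖x‖ ^ p + ‖y‖ ^ p := by
    have hx : 0 ≤ ‖x‖ ^ p := by positivity
    have hy : 0 ≤ ‖y‖ ^ p := by positivity
    rcases max_choice ‖x‖ ‖y‖ with h | h <;> rw [h] <;> linarith
  have h5 : 0 ≤ (max ‖x‖ ‖y‖) ^ p := by positivity
  nlinarith

lemma Gr.shift {p A : ℝ} (hp : 0 < p) (hp2 : p < 2) (hA : 0 ≤ A)
    {w : EuclideanSpace ℝ (Fin n) → ℝ} (hw : Gr n p A w) (x y : EuclideanSpace ℝ (Fin n)) :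
    |w (x + y)| ≤ (4 * A * (1 + ‖x‖ ^ p)) * (1 + ‖y‖ ^ p) := by
  have h1 := hw.2 (x + y)
  have h2 := norm_add_rpow hp hp2 x y
  have hx : 0 ≤ ‖x‖ ^ p := by positivity
  have hy : 0 ≤ ‖y‖ ^ p := by positivity
  calc |w (x + y)| ≤ A * (1 + ‖x + y‖ ^ p) := h1
    _ ≤ A * (4 * (1 + ‖x‖ ^ p) * (1 + ‖y‖ ^ p)) := by
        refine mul_le_mul_of_nonneg_left ?_ hA
        nlinarith [mul_nonneg hx hy]
    _ = _ := by ring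

lemma Gr.integrable {p A : ℝ} (hp : 0 < p) (hp2 : p < 2) (hA : 0 ≤ A)
    {w : EuclideanSpace ℝ (Fin n) → ℝ} (hw : Gr n p A w) (x : EuclideanSpace ℝ (Fin n))
    {t : ℝ} (ht : 0 < t) : Integrable (fun y => w (x + y) * Gk n t y) := by
  have hI := (moment_integrable (n := n) hp hp2 ht).const_mul (4 * A * (1 + ‖x‖ ^ p))
  refine hI.mono' ?_ (Eventually.of_forall fun z => ?_)
  · refine Measurable.aestronglyMeasurable ?_
    have := Gk_measurable' (n := n) t
    have := hw.1
    fun_prop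
  · have hG := Gk_pos (n := n) ht z
    rw [norm_mul, Real.norm_of_nonneg hG.le, ← mul_assoc, Real.norm_eq_abs]
    refine mul_le_mul_of_nonneg_right ?_ hG.le
    refine (hw.shift hp hp2 hA x z).trans ?_
    rw [← mul_assoc]
    refine le_mul_of_one_le_right (by positivity) ?_
    have : 0 ≤ ‖z‖ ^ 2 / t := by positivity
    linarith

lemma Gr.HU_le {p A : ℝ} (hp : 0 < p) (hp2 : p < 2) (hA : 0 ≤ A)
    {w : EuclideanSpace ℝ (Fin n) → ℝ} (hw : Gr n p A w) (x : EuclideanSpace ℝ (Fin n))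
    {t : ℝ} (ht : 0 < t) :
    |HU n w t x| ≤ (4 * A * (1 + ‖x‖ ^ p)) * ((1 + t ^ (p / 2)) * Mo n p) := by
  refine le_trans ?_ (mul_le_mul_of_nonneg_left (moment_le (n := n) hp hp2 ht) (by positivity))
  rw [← integral_const_mul]
  unfold HU
  rw [← Real.norm_eq_abs]
  refine norm_integral_le_of_norm_le
    ((moment_integrable (n := n) hp hp2 ht).const_mul _) (Eventually.of_forall fun z => ?_)
  have hG := Gk_pos (n := n) ht z
  rw [norm_mul, Real.norm_of_nonneg hG.le, ← mul_assoc, Real.norm_eq_abs]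
  refine mul_le_mul_of_nonneg_right ?_ hG.le
  refine (hw.shift hp hp2 hA x z).trans ?_
  rw [← mul_assoc]
  refine le_mul_of_one_le_right (by positivity) ?_
  have : 0 ≤ ‖z‖ ^ 2 / t := by positivity
  linarith

lemma HU_measurable {w : EuclideanSpace ℝ (Fin n) → ℝ} (hw : Measurable w) :
    Measurable (fun q : ℝ × EuclideanSpace ℝ (Fin n) => HU n w q.1 q.2) := by
  have : StronglyMeasurable (Function.uncurry
      fun (q : ℝ × EuclideanSpace ℝ (Fin n)) (y : EuclideanSpace ℝ (Fin n)) =>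
        w (q.2 + y) * Gk n q.1 y) := by
    refine Measurable.stronglyMeasurable ?_
    unfold Function.uncurry
    have h : Measurable (fun a : (ℝ × EuclideanSpace ℝ (Fin n)) × EuclideanSpace ℝ (Fin n) =>
        Gk n a.1.1 a.2) := (Gk_measurable (n := n)).comp (by fun_prop : Measurable
          (fun a : (ℝ × EuclideanSpace ℝ (Fin n)) × EuclideanSpace ℝ (Fin n) => (a.1.1, a.2)))
    refine Measurable.mul (by fun_prop) h
  exact (this.integral_prod_right (ν := volume)).measurable

end FracLiou


namespace FracLiou

variable {n : ℕ}

lemma pow_sub_one_le (k : ℕ) {h : ℝ} (h0 : 0 ≤ h) (h1 : h ≤ 1) :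
    (1 + h) ^ k - 1 ≤ h * (2 ^ k - 1) := by
  induction k with
  | zero => simp
  | succ k ih =>
    have h2 : 0 ≤ h * ((2 : ℝ) ^ k - 1) := mul_nonneg h0 (by
      have := one_le_pow₀ (M₀ := ℝ) (a := 2) (by norm_num) (n := k); linarith)
    rw [pow_succ, pow_succ]
    nlinarith

lemma Gk_ratio {s r : ℝ} (hs : 0 < s) (hr : 0 < r) (z : EuclideanSpace ℝ (Fin n)) :
    Gk n s z = Gk n r z * ((r / s) ^ ((n : ℝ) / 2) *
      Real.exp (-(‖z‖ ^ 2 / (2 * r) * ((r - s) / s)))) := by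
  unfold Gk
  have h1 : (2 * Real.pi * s) ^ (-(n : ℝ) / 2) =
      (2 * Real.pi * r) ^ (-(n : ℝ) / 2) * (r / s) ^ ((n : ℝ) / 2) := by
    have : (2 * Real.pi * s) = (2 * Real.pi * r) * (r / s)⁻¹ := by field_simp
    rw [this, Real.mul_rpow (by positivity) (by positivity), Real.inv_rpow (by positivity),
      ← Real.rpow_neg (by positivity)]
    congr 2; ring
  have h2 : -‖z‖ ^ 2 / (2 * s) = -‖z‖ ^ 2 / (2 * r) + -(‖z‖ ^ 2 / (2 * r) * ((r - s) / s)) := by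
    field_simp; ring
  rw [h1, h2, Real.exp_add]; ring

lemma Gk_diff {s t : ℝ} (hs : 0 < s) (ht : 0 ≤ t) (hts : t ≤ s)
    (z : EuclideanSpace ℝ (Fin n)) :
    |Gk n (s + t) z - Gk n s z| ≤ 2 ^ n * (t / s) * ((1 + ‖z‖ ^ 2 / (s + t)) * Gk n (s + t) z) := by
  have hr : 0 < s + t := by positivity
  have hG := Gk_pos (n := n) hr z
  rw [Gk_ratio hs hr z]
  set h := t / s with hh
  have h0 : 0 ≤ h := by positivity
  have h1 : h ≤ 1 := by rw [hh, div_le_one hs]; exact hts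
  have e1 : (s + t) / s = 1 + h := by rw [hh]; field_simp
  have e2 : (s + t - s) / s = h := by rw [hh]; ring_nf
  rw [e1, e2]
  set a := ‖z‖ ^ 2 / (2 * (s + t)) with ha
  have ha0 : 0 ≤ a := by positivity
  have ha2 : ‖z‖ ^ 2 / (s + t) = 2 * a := by rw [ha]; field_simp
  rw [ha2]
  have k1 : (1 + h) ^ ((n : ℝ) / 2) ≤ 1 + h * 2 ^ n := by
    have q1 : (1 + h) ^ ((n : ℝ) / 2) ≤ (1 + h) ^ (n : ℝ) :=
      Real.rpow_le_rpow_of_exponent_le (by linarith) (by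
        have : (0 : ℝ) ≤ n := Nat.cast_nonneg n
        linarith)
    rw [Real.rpow_natCast] at q1
    have := pow_sub_one_le n h0 h1
    nlinarith
  have k2 : 1 ≤ (1 + h) ^ ((n : ℝ) / 2) := Real.one_le_rpow (by linarith) (by positivity)
  have k3 : Real.exp (-(a * h)) ≤ 1 := Real.exp_le_one_iff.2 (by nlinarith)
  have k4 : 1 - a * h ≤ Real.exp (-(a * h)) := by
    have := Real.add_one_le_exp (-(a * h)); linarith
  have k5 : 0 < Real.exp (-(a * h)) := Real.exp_pos _
  have k6 : (1 : ℝ) ≤ 2 ^ n := one_le_pow₀ (by norm_num)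
  set X := (1 + h) ^ ((n : ℝ) / 2)
  set Y := Real.exp (-(a * h))
  have f1 : Gk n (s + t) z - Gk n (s + t) z * (X * Y) = Gk n (s + t) z * (1 - X * Y) := by ring
  rw [f1, abs_mul, abs_of_pos hG]
  have f2 : |1 - X * Y| ≤ 2 ^ n * h * (1 + 2 * a) := by
    have g1 : 0 ≤ h * a := mul_nonneg h0 ha0
    have g2 : h * a ≤ 2 ^ n * (h * a) := le_mul_of_one_le_left g1 k6
    rw [abs_le]; constructor
    · have : X * Y ≤ X := by nlinarith
      nlinarith
    · have : Y ≤ X * Y := by nlinarith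
      have g3 : 0 ≤ 2 ^ n * h := by positivity
      nlinarith
  calc Gk n (s + t) z * |1 - X * Y| ≤ Gk n (s + t) z * (2 ^ n * h * (1 + 2 * a)) :=
        mul_le_mul_of_nonneg_left f2 hG.le
    _ = _ := by ring

lemma HU_diff {p A : ℝ} (hp : 0 < p) (hp2 : p < 2) (hA : 0 ≤ A)
    {w : EuclideanSpace ℝ (Fin n) → ℝ} (hw : Gr n p A w) (x : EuclideanSpace ℝ (Fin n))
    {s t : ℝ} (hs : 0 < s) (ht : 0 ≤ t) (hts : t ≤ s) :
    |HU n w (s + t) x - HU n w s x| ≤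
      (4 * A * (1 + ‖x‖ ^ p)) * (2 ^ n * (t / s)) * ((1 + (s + t) ^ (p / 2)) * Mo n p) := by
  have hr : 0 < s + t := by positivity
  refine le_trans ?_ (mul_le_mul_of_nonneg_left (moment_le (n := n) hp hp2 hr) (by positivity))
  rw [← integral_const_mul]
  unfold HU
  rw [← integral_sub (hw.integrable hp hp2 hA x hr) (hw.integrable hp hp2 hA x hs),
    ← Real.norm_eq_abs]
  refine norm_integral_le_of_norm_le
    ((moment_integrable (n := n) hp hp2 hr).const_mul _) (Eventually.of_forall fun z => ?_)
  rw [← mul_sub, norm_mul, Real.norm_eq_abs, Real.norm_eq_abs]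
  calc _ ≤ ((4 * A * (1 + ‖x‖ ^ p)) * (1 + ‖z‖ ^ p)) *
        (2 ^ n * (t / s) * ((1 + ‖z‖ ^ 2 / (s + t)) * Gk n (s + t) z)) :=
        mul_le_mul (hw.shift hp hp2 hA x z) (Gk_diff hs ht hts z) (abs_nonneg _) (by positivity)
    _ = _ := by ring

/-- dominating function in time. -/
noncomputable def bd (p s t : ℝ) : ℝ := if t ≤ s then t else t ^ (p / 2)

/-- constant in the domination -/
noncomputable def bdC (n : ℕ) (p A s : ℝ) (x : EuclideanSpace ℝ (Fin n)) : ℝ :=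
  (4 * A * (1 + ‖x‖ ^ p)) * Mo n p * (2 ^ n * (1 + (2 * s) ^ (p / 2)) / s + (2 * s ^ (-(p / 2)) + 4))

lemma HU_diff_unif {p A : ℝ} (hp : 0 < p) (hp2 : p < 2) (hA : 0 ≤ A)
    {w : EuclideanSpace ℝ (Fin n) → ℝ} (hw : Gr n p A w) (x : EuclideanSpace ℝ (Fin n))
    {s t : ℝ} (hs : 0 < s) (ht : 0 < t) :
    |HU n w (s + t) x - HU n w s x| ≤ bdC n p A s x * bd p s t := by
  have hM := Mo_nonneg (n := n) p
  set B := 4 * A * (1 + ‖x‖ ^ p) with hB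
  have hB0 : 0 ≤ B := by positivity
  unfold bdC bd
  rw [← hB]
  split_ifs with hts
  · refine (HU_diff hp hp2 hA hw x hs ht.le hts).trans ?_
    rw [← hB]
    have h1 : (s + t) ^ (p / 2) ≤ (2 * s) ^ (p / 2) :=
      Real.rpow_le_rpow (by positivity) (by linarith) (by positivity)
    have h2 : 0 ≤ s ^ (-(p / 2)) := by positivity
    calc B * (2 ^ n * (t / s)) * ((1 + (s + t) ^ (p / 2)) * Mo n p)
        ≤ B * (2 ^ n * (t / s)) * ((1 + (2 * s) ^ (p / 2)) * Mo n p) := by gcongr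
      _ = B * Mo n p * (2 ^ n * (1 + (2 * s) ^ (p / 2)) / s) * t := by ring
      _ ≤ _ := by gcongr; linarith
  · push Not at hts
    have h1 := hw.HU_le hp hp2 hA x hs
    have h2 := hw.HU_le hp hp2 hA x (t := s + t) (by positivity)
    rw [← hB] at h1 h2
    have k1 : s ^ (p / 2) ≤ t ^ (p / 2) := Real.rpow_le_rpow hs.le hts.le (by positivity)
    have k2 : (s + t) ^ (p / 2) ≤ 2 * t ^ (p / 2) := by
      have q1 : (s + t) ^ (p / 2) ≤ (2 * t) ^ (p / 2) :=
        Real.rpow_le_rpow (by positivity) (by linarith) (by positivity)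
      rw [Real.mul_rpow (by norm_num) ht.le] at q1
      have q2 : (2 : ℝ) ^ (p / 2) ≤ 2 := by
        have := Real.rpow_le_rpow_of_exponent_le (x := 2) (by norm_num)
          (show p / 2 ≤ 1 by linarith)
        rwa [Real.rpow_one] at this
      have : 0 ≤ t ^ (p / 2) := by positivity
      nlinarith
    have k3 : 1 ≤ s ^ (-(p / 2)) * t ^ (p / 2) := by
      calc (1 : ℝ) = s ^ (-(p / 2)) * s ^ (p / 2) := by
            rw [← Real.rpow_add hs]; simp
        _ ≤ _ := by gcongr
    have k4 : |HU n w (s + t) x - HU n w s x| ≤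
        B * ((1 + (s + t) ^ (p / 2)) * Mo n p) + B * ((1 + s ^ (p / 2)) * Mo n p) :=
      (abs_sub _ _).trans (add_le_add h2 h1)
    refine k4.trans ?_
    have k5 : 0 ≤ 2 ^ n * (1 + (2 * s) ^ (p / 2)) / s * t ^ (p / 2) := by positivity
    have hBM : 0 ≤ B * Mo n p := by positivity
    calc _ = B * Mo n p * (2 + (s + t) ^ (p / 2) + s ^ (p / 2)) := by ring
      _ ≤ B * Mo n p * ((2 ^ n * (1 + (2 * s) ^ (p / 2)) / s + (2 * s ^ (-(p / 2)) + 4)) *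
          t ^ (p / 2)) := by
          refine mul_le_mul_of_nonneg_left ?_ hBM
          have : 0 ≤ t ^ (p / 2) := by positivity
          nlinarith
      _ = _ := by ring

lemma bd_integrable {p σ s : ℝ} (hs : 0 < s) (hσ1 : σ < 1) (hp : p < 2 * σ) :
    IntegrableOn (fun t => bd p s t * t ^ (-1 - σ)) (Ioi 0) := by
  rw [← Ioc_union_Ioi_eq_Ioi hs.le]
  refine IntegrableOn.union ?_ ?_
  · have h1 : IntegrableOn (fun t : ℝ => t ^ (-σ)) (Ioc 0 s) :=
      (intervalIntegrable_iff_integrableOn_Ioc_of_le hs.le).1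
        (intervalIntegral.intervalIntegrable_rpow' (by linarith))
    refine h1.congr_fun (fun t ht => ?_) measurableSet_Ioc
    simp only [bd, if_pos ht.2]
    nth_rewrite 2 [← Real.rpow_one t]
    rw [← Real.rpow_add ht.1]; ring_nf
  · have h1 : IntegrableOn (fun t : ℝ => t ^ (p / 2 - 1 - σ)) (Ioi s) :=
      (integrableOn_Ioi_rpow_iff hs).2 (by linarith)
    refine h1.congr_fun (fun t ht => ?_) measurableSet_Ioi
    have ht0 : 0 < t := hs.trans ht
    simp only [bd, if_neg (not_le.2 (mem_Ioi.1 ht))]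
    rw [← Real.rpow_add ht0]; ring_nf

lemma HU_diff_integrable {p A σ : ℝ} (hp : 0 < p) (hp2 : p < 2) (hA : 0 ≤ A)
    (hσ1 : σ < 1) (hpσ : p < 2 * σ)
    {w : EuclideanSpace ℝ (Fin n) → ℝ} (hw : Gr n p A w) (x : EuclideanSpace ℝ (Fin n))
    {s : ℝ} (hs : 0 < s) :
    IntegrableOn (fun t => (HU n w (s + t) x - HU n w s x) * t ^ (-1 - σ)) (Ioi 0) := by
  have hI := (bd_integrable hs hσ1 hpσ).const_mul (bdC n p A s x)
  refine hI.mono' ?_ ?_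
  · refine Measurable.aestronglyMeasurable ?_
    have h : Measurable (fun t : ℝ => HU n w (s + t) x) :=
      (HU_measurable hw.1).comp (by fun_prop : Measurable (fun t : ℝ => (s + t, x)))
    fun_prop
  · refine (ae_restrict_iff' measurableSet_Ioi).2 (Eventually.of_forall fun t ht => ?_)
    have ht0 : (0 : ℝ) < t := ht
    rw [norm_mul, Real.norm_of_nonneg (by positivity : 0 ≤ t ^ (-1 - σ)), ← mul_assoc]
    exact mul_le_mul_of_nonneg_right (HU_diff_unif hp hp2 hA hw x hs ht0) (by positivity)

lemma HU_diff_tendsto {p A : ℝ} (hp : 0 < p) (hp2 : p < 2) (hA : 0 ≤ A)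
    {w : EuclideanSpace ℝ (Fin n) → ℝ} (hw : Gr n p A w) (x : EuclideanSpace ℝ (Fin n))
    {h : ℝ} (hh : 0 ≤ h) :
    Tendsto (fun s => HU n w (s + h) x - HU n w s x) atTop (𝓝 0) := by
  have hM := Mo_nonneg (n := n) p
  set B := 4 * A * (1 + ‖x‖ ^ p) with hB
  have hB0 : 0 ≤ B := by positivity
  have hlim : Tendsto (fun s : ℝ => B * 2 ^ n * h * Mo n p * (s ^ (-1 : ℝ) +
      2 * s ^ (-(1 - p / 2)))) atTop (𝓝 (B * 2 ^ n * h * Mo n p * (0 + 2 * 0))) := by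
    refine Tendsto.const_mul _ (Tendsto.add ?_ (Tendsto.const_mul _ ?_))
    · exact tendsto_rpow_neg_atTop one_pos
    · exact tendsto_rpow_neg_atTop (by linarith)
  simp only [mul_zero, add_zero] at hlim
  refine squeeze_zero_norm' ?_ hlim
  filter_upwards [eventually_ge_atTop h, eventually_gt_atTop 0] with s hs hs0
  rw [Real.norm_eq_abs]
  refine (HU_diff hp hp2 hA hw x hs0 hh hs).trans ?_
  rw [← hB]
  have k2 : (s + h) ^ (p / 2) ≤ 2 * s ^ (p / 2) := by
    have q1 : (s + h) ^ (p / 2) ≤ (2 * s) ^ (p / 2) :=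
      Real.rpow_le_rpow (by positivity) (by linarith) (by positivity)
    rw [Real.mul_rpow (by norm_num) hs0.le] at q1
    have q2 : (2 : ℝ) ^ (p / 2) ≤ 2 := by
      have := Real.rpow_le_rpow_of_exponent_le (x := 2) (by norm_num)
        (show p / 2 ≤ 1 by linarith)
      rwa [Real.rpow_one] at this
    have : 0 ≤ s ^ (p / 2) := by positivity
    nlinarith
  have k3 : s ^ (-(1 - p / 2)) = s ^ (p / 2) / s := by
    rw [neg_sub, Real.rpow_sub_one hs0.ne']
  rw [k3, Real.rpow_neg_one]
  calc _ ≤ B * (2 ^ n * (h / s)) * ((1 + 2 * s ^ (p / 2)) * Mo n p) := by gcongr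
    _ = _ := by ring

lemma HU_scaled {t : ℝ} (ht : 0 < t) (w : EuclideanSpace ℝ (Fin n) → ℝ)
    (x : EuclideanSpace ℝ (Fin n)) : HU n w t x = ∫ z, w (x + √t • z) * Gk n 1 z :=
  Gk_scale ht (fun y => w (x + y))

lemma HU_cont {p A : ℝ} (hp : 0 < p) (hp2 : p < 2) (hA : 0 ≤ A)
    {w : EuclideanSpace ℝ (Fin n) → ℝ} (hw : Gr n p A w) (hc : Continuous w)
    (x : EuclideanSpace ℝ (Fin n)) :
    Continuous (fun t => ∫ z, w (x + √t • z) * Gk n 1 z) := by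
  refine continuous_iff_continuousAt.2 fun t0 => ?_
  have hI := (weight_integrable (n := n) hp hp2 one_pos).const_mul
    (4 * A * (1 + ‖x‖ ^ p) * (1 + √(t0 + 1) ^ p))
  refine continuousAt_of_dominated (bound := _) (Eventually.of_forall fun t => ?_) ?_ hI
    (Eventually.of_forall fun z => ?_)
  · refine Measurable.aestronglyMeasurable ?_
    have := Gk_measurable' (n := n) 1
    have := hw.1
    fun_prop
  · filter_upwards [eventually_lt_nhds (show t0 < t0 + 1 by linarith)] with t ht
    refine Eventually.of_forall fun z => ?_
    have hG := Gk_pos (n := n) one_pos z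
    rw [norm_mul, Real.norm_of_nonneg hG.le, ← mul_assoc, Real.norm_eq_abs]
    refine mul_le_mul_of_nonneg_right ?_ hG.le
    refine (hw.shift hp hp2 hA x _).trans ?_
    rw [mul_assoc _ (1 + √(t0 + 1) ^ p)]
    refine mul_le_mul_of_nonneg_left ?_ (by positivity)
    have h1 : ‖√t • z‖ ^ p ≤ √(t0 + 1) ^ p * ‖z‖ ^ p := by
      rw [norm_smul, Real.norm_of_nonneg (Real.sqrt_nonneg _), Real.mul_rpow (by positivity)
        (by positivity)]
      refine mul_le_mul_of_nonneg_right ?_ (by positivity)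
      exact Real.rpow_le_rpow (by positivity) (Real.sqrt_le_sqrt ht.le) hp.le
    have h2 : 0 ≤ √(t0 + 1) ^ p := by positivity
    have h3 : 0 ≤ ‖z‖ ^ p := by positivity
    have h4 : 0 ≤ ‖z‖ ^ 2 := by positivity
    calc 1 + ‖√t • z‖ ^ p ≤ (1 + √(t0 + 1) ^ p) * (1 + ‖z‖ ^ p) := by nlinarith
      _ ≤ (1 + √(t0 + 1) ^ p) * ((1 + ‖z‖ ^ p) * (1 + ‖z‖ ^ 2)) := by
        refine mul_le_mul_of_nonneg_left ?_ (by positivity)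
        nlinarith [mul_nonneg h3 h4]
  · exact Continuous.continuousAt (by fun_prop)

lemma Gk_conv_pt {s t : ℝ} (hs : 0 < s) (ht : 0 < t) (z y : EuclideanSpace ℝ (Fin n)) :
    Gk n t (z - y) * Gk n s y =
      Gk n (s + t) z * Gk n (s * t / (s + t)) (y - (s / (s + t)) • z) := by
  unfold Gk
  have h1 : (2 * Real.pi * t) ^ (-(n : ℝ) / 2) * (2 * Real.pi * s) ^ (-(n : ℝ) / 2) =
      (2 * Real.pi * (s + t)) ^ (-(n : ℝ) / 2) *
        (2 * Real.pi * (s * t / (s + t))) ^ (-(n : ℝ) / 2) := by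
    rw [← Real.mul_rpow (by positivity) (by positivity),
      ← Real.mul_rpow (by positivity) (by positivity)]
    congr 1; field_simp
  have h2 : -‖z - y‖ ^ 2 / (2 * t) + -‖y‖ ^ 2 / (2 * s) = -‖z‖ ^ 2 / (2 * (s + t)) +
      -‖y - (s / (s + t)) • z‖ ^ 2 / (2 * (s * t / (s + t))) := by
    rw [norm_sub_sq_real, norm_sub_sq_real, inner_smul_right, norm_smul, mul_pow,
      real_inner_comm z y, Real.norm_eq_abs, sq_abs]
    field_simp
    ring
  calc _ = ((2 * Real.pi * t) ^ (-(n : ℝ) / 2) * (2 * Real.pi * s) ^ (-(n : ℝ) / 2)) *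
        Real.exp (-‖z - y‖ ^ 2 / (2 * t) + -‖y‖ ^ 2 / (2 * s)) := by
          rw [Real.exp_add]; ring
    _ = _ := by rw [h1, h2, Real.exp_add]; ring

lemma Gk_conv_integrable {s t : ℝ} (hs : 0 < s) (ht : 0 < t) (z : EuclideanSpace ℝ (Fin n)) :
    Integrable (fun y => Gk n t (z - y) * Gk n s y) := by
  simp_rw [Gk_conv_pt hs ht]
  exact ((Gk_integrable (n := n) (by positivity)).comp_sub_right _).const_mul _

lemma Gk_conv {s t : ℝ} (hs : 0 < s) (ht : 0 < t) (z : EuclideanSpace ℝ (Fin n)) :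
    ∫ y, Gk n t (z - y) * Gk n s y = Gk n (s + t) z := by
  simp_rw [Gk_conv_pt hs ht]
  rw [integral_const_mul, integral_sub_right_eq_self, Gk_integral (by positivity), mul_one]

lemma HU_semigroup {p A : ℝ} (hp : 0 < p) (hp2 : p < 2) (hA : 0 ≤ A)
    {w : EuclideanSpace ℝ (Fin n) → ℝ} (hw : Gr n p A w) (x : EuclideanSpace ℝ (Fin n))
    {s t : ℝ} (hs : 0 < s) (ht : 0 < t) :
    ∫ y, HU n w t (x + y) * Gk n s y = HU n w (s + t) x := by
  have hst : 0 < s + t := by positivity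
  have h1 : ∀ y, HU n w t (x + y) * Gk n s y =
      ∫ z, w (x + z) * (Gk n t (z - y) * Gk n s y) := by
    intro y
    unfold HU
    rw [← integral_mul_const, ← integral_sub_right_eq_self _ y]
    congr 1; ext z
    rw [show x + y + (z - y) = x + z by abel]; ring
  simp_rw [h1]
  rw [integral_integral_swap]
  · unfold HU
    congr 1; ext z
    rw [integral_const_mul, Gk_conv hs ht]
  · have hm : Measurable (Function.uncurry fun (y z : EuclideanSpace ℝ (Fin n)) =>
        w (x + z) * (Gk n t (z - y) * Gk n s y)) := by
      unfold Function.uncurry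
      have := hw.1
      have := Gk_measurable' (n := n) t
      have := Gk_measurable' (n := n) s
      fun_prop
    rw [integrable_prod_iff' hm.aestronglyMeasurable]
    refine ⟨Eventually.of_forall fun z => ?_, ?_⟩
    · exact (Gk_conv_integrable hs ht z).const_mul (w (x + z))
    refine ((hw.integrable hp hp2 hA x hst).norm).congr (Eventually.of_forall fun z => ?_)
    simp only [Function.uncurry, norm_mul]
    rw [integral_const_mul]
    have : ∀ y, ‖Gk n t (z - y)‖ * ‖Gk n s y‖ = Gk n t (z - y) * Gk n s y := fun y => by
      rw [Real.norm_of_nonneg (Gk_pos ht _).le, Real.norm_of_nonneg (Gk_pos hs _).le]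
    simp_rw [this]
    rw [Gk_conv hs ht, Real.norm_of_nonneg (Gk_pos hst _).le]

end FracLiou


namespace FracLiou

variable {n : ℕ}

/-- time profile of the kernel -/
noncomputable def k0 (n : ℕ) (σ r : ℝ) : ℝ :=
  (2 * Real.pi * r) ^ (-(n : ℝ) / 2) * Real.exp (-1 / (2 * r)) * r ^ (-1 - σ)

lemma k0_integrable {σ : ℝ} (hσ : 0 < σ) : IntegrableOn (k0 n σ) (Ioi 0) := by
  have h1 : IntegrableOn (fun x : ℝ => x ^ ((n : ℝ) / 2 + σ - 1) * Real.exp (-(1 / 2) * x ^ (1 : ℝ)))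
      (Ioi 0) :=
    integrableOn_rpow_mul_exp_neg_mul_rpow (by
      have : (0 : ℝ) ≤ n := Nat.cast_nonneg n
      linarith) one_pos (by norm_num)
  have h2 := ((integrableOn_Ioi_comp_rpow_iff' _ (p := -1) (by norm_num)).2 h1).const_mul
    ((2 * Real.pi) ^ (-(n : ℝ) / 2))
  refine IntegrableOn.congr_fun h2 (fun r hr => ?_) measurableSet_Ioi
  have hr0 : (0 : ℝ) < r := hr
  simp only [k0, smul_eq_mul, Real.rpow_one]
  rw [Real.mul_rpow (by positivity) hr0.le, ← Real.rpow_mul hr0.le]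
  have e1 : -(1 / 2) * r ^ (-1 : ℝ) = -1 / (2 * r) := by
    rw [Real.rpow_neg_one]; field_simp
  rw [e1]
  have e2 : r ^ (-1 - 1 : ℝ) * r ^ (-1 * ((n : ℝ) / 2 + σ - 1)) =
      r ^ (-(n : ℝ) / 2) * r ^ (-1 - σ) := by
    rw [← Real.rpow_add hr0, ← Real.rpow_add hr0]; congr 1; ring
  calc _ = (2 * Real.pi) ^ (-(n : ℝ) / 2) * Real.exp (-1 / (2 * r)) *
        (r ^ (-1 - 1 : ℝ) * r ^ (-1 * ((n : ℝ) / 2 + σ - 1))) := by ring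
    _ = _ := by rw [e2]; ring

/-- the constant -/
noncomputable def kap (n : ℕ) (σ : ℝ) : ℝ := ∫ r in Ioi (0 : ℝ), k0 n σ r

lemma k0_pos {σ r : ℝ} (hr : 0 < r) : 0 < k0 n σ r := by unfold k0; positivity

lemma kap_pos {σ : ℝ} (hσ : 0 < σ) : 0 < kap n σ := by
  unfold kap
  rw [setIntegral_pos_iff_support_of_nonneg_ae ?_ (k0_integrable hσ)]
  · have : Ioi (0 : ℝ) ⊆ Function.support (k0 n σ) ∩ Ioi 0 :=
      fun r hr => ⟨(k0_pos (mem_Ioi.1 hr)).ne', hr⟩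
    refine lt_of_lt_of_le ?_ (measure_mono this)
    simp
  · exact (ae_restrict_iff' measurableSet_Ioi).2
      (Eventually.of_forall fun r hr => (k0_pos (mem_Ioi.1 hr)).le)

lemma Gk_time_scale {σ r : ℝ} (hr : 0 < r) {z : EuclideanSpace ℝ (Fin n)} (hz : z ≠ 0) :
    Gk n (‖z‖ ^ 2 * r) z * (‖z‖ ^ 2 * r) ^ (-1 - σ) =
      (‖z‖ ^ ((n : ℝ) + 2 * σ) * ‖z‖ ^ 2)⁻¹ * k0 n σ r := by
  have hz0 : 0 < ‖z‖ := norm_pos_iff.2 hz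
  unfold Gk k0
  have e1 : -‖z‖ ^ 2 / (2 * (‖z‖ ^ 2 * r)) = -1 / (2 * r) := by field_simp
  have e2 : (2 * Real.pi * (‖z‖ ^ 2 * r)) = ‖z‖ ^ 2 * (2 * Real.pi * r) := by ring
  rw [e1, e2, Real.mul_rpow (x := ‖z‖ ^ 2) (y := 2 * Real.pi * r) (by positivity) (by positivity),
    Real.mul_rpow (x := ‖z‖ ^ 2) (y := r) (by positivity) hr.le]
  have e3 : (‖z‖ ^ ((n : ℝ) + 2 * σ) * ‖z‖ ^ 2)⁻¹ =
      (‖z‖ ^ 2) ^ (-(n : ℝ) / 2) * (‖z‖ ^ 2) ^ (-1 - σ) := by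
    rw [← Real.rpow_two, ← Real.rpow_add hz0, ← Real.rpow_neg hz0.le, ← Real.rpow_mul hz0.le,
      ← Real.rpow_mul hz0.le, ← Real.rpow_add hz0]
    congr 1; ring
  rw [e3]; ring

lemma kernel_integrable {σ : ℝ} (hσ : 0 < σ) {z : EuclideanSpace ℝ (Fin n)} (hz : z ≠ 0) :
    IntegrableOn (fun t => Gk n t z * t ^ (-1 - σ)) (Ioi 0) := by
  have hz0 : 0 < ‖z‖ ^ 2 := by have := norm_pos_iff.2 hz; positivity
  have h := integrableOn_Ioi_comp_mul_left_iff (fun t => Gk n t z * t ^ (-1 - σ)) 0 hz0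
  rw [mul_zero] at h
  rw [← h]
  refine IntegrableOn.congr_fun ((k0_integrable (n := n) hσ).const_mul
    ((‖z‖ ^ ((n : ℝ) + 2 * σ) * ‖z‖ ^ 2)⁻¹)) (fun r hr => ?_) measurableSet_Ioi
  exact (Gk_time_scale (mem_Ioi.1 hr) hz).symm

lemma kernel_integral {σ : ℝ} {z : EuclideanSpace ℝ (Fin n)} (hz : z ≠ 0) :
    ∫ t in Ioi (0 : ℝ), Gk n t z * t ^ (-1 - σ) = kap n σ / ‖z‖ ^ ((n : ℝ) + 2 * σ) := by
  have hz1 := norm_pos_iff.2 hz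
  have hz0 : 0 < ‖z‖ ^ 2 := by positivity
  have h := integral_comp_mul_left_Ioi (fun t => Gk n t z * t ^ (-1 - σ)) 0 hz0
  rw [mul_zero, setIntegral_congr_fun measurableSet_Ioi
    (fun r hr => Gk_time_scale (mem_Ioi.1 hr) hz), integral_const_mul, smul_eq_mul] at h
  have hN : 0 < ‖z‖ ^ ((n : ℝ) + 2 * σ) := by positivity
  change _ * kap n σ = _ at h
  field_simp at h ⊢
  linarith

lemma HU_tendsto {ι : Type*} {l : Filter ι} [l.IsCountablyGenerated]
    {p A : ℝ} (hp : 0 < p) (hp2 : p < 2) (hA : 0 ≤ A)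
    {W : ι → EuclideanSpace ℝ (Fin n) → ℝ} {w : EuclideanSpace ℝ (Fin n) → ℝ}
    (hW : ∀ᶠ i in l, Gr n p A (W i)) (hlim : ∀ y, Tendsto (fun i => W i y) l (𝓝 (w y)))
    {t : ℝ} (ht : 0 < t) (x : EuclideanSpace ℝ (Fin n)) :
    Tendsto (fun i => HU n (W i) t x) l (𝓝 (HU n w t x)) := by
  have hI := (moment_integrable (n := n) hp hp2 ht).const_mul (4 * A * (1 + ‖x‖ ^ p))
  unfold HU
  refine tendsto_integral_filter_of_dominated_convergence _ ?_ ?_ hI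
    (Eventually.of_forall fun z => (hlim _).mul_const _)
  · filter_upwards [hW] with i hi
    exact (hi.integrable hp hp2 hA x ht).aestronglyMeasurable
  · filter_upwards [hW] with i hi
    refine Eventually.of_forall fun z => ?_
    have hG := Gk_pos (n := n) ht z
    rw [norm_mul, Real.norm_of_nonneg hG.le, ← mul_assoc, Real.norm_eq_abs]
    refine mul_le_mul_of_nonneg_right ?_ hG.le
    refine (hi.shift hp hp2 hA x z).trans ?_
    rw [← mul_assoc]
    refine le_mul_of_one_le_right (by positivity) ?_
    have : 0 ≤ ‖z‖ ^ 2 / t := by positivity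
    linarith

lemma tail_integrable {p σ τ : ℝ} (hτ : 0 < τ) (hσ : 0 < σ) (hpσ : p < 2 * σ) :
    IntegrableOn (fun t : ℝ => (1 + t ^ (p / 2)) * t ^ (-1 - σ)) (Ioi τ) := by
  have h1 : IntegrableOn (fun t : ℝ => t ^ (-1 - σ)) (Ioi τ) :=
    (integrableOn_Ioi_rpow_iff hτ).2 (by linarith)
  have h2 : IntegrableOn (fun t : ℝ => t ^ (p / 2 - 1 - σ)) (Ioi τ) :=
    (integrableOn_Ioi_rpow_iff hτ).2 (by linarith)
  refine IntegrableOn.congr_fun (h1.add h2) (fun t ht => ?_) measurableSet_Ioi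
  have ht0 : 0 < t := hτ.trans ht
  simp only [Pi.add_apply]
  rw [add_mul, one_mul, ← Real.rpow_add ht0]
  ring_nf

lemma space_integrable {p σ C δ : ℝ} (hp : 0 < p) (hσ : 0 < σ) (hpσ : p < 2 * σ) (hC : 0 ≤ C)
    (hδ : 0 < δ) {D : EuclideanSpace ℝ (Fin n) → ℝ} (hD : Gr n p C D)
    (hδD : ∀ z, ‖z‖ < δ → D z = 0) :
    Integrable (fun z => D z / ‖z‖ ^ ((n : ℝ) + 2 * σ)) := by
  have hI : Integrable (fun z : EuclideanSpace ℝ (Fin n) =>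
      (1 + ‖z‖) ^ (-((n : ℝ) + 2 * σ - p))) := by
    refine integrable_one_add_norm ?_
    rw [finrank_euclideanSpace, Fintype.card_fin]; linarith
  refine (hI.const_mul (C * 2 * (1 + 1 / δ) ^ ((n : ℝ) + 2 * σ))).mono' ?_
    (Eventually.of_forall fun z => ?_)
  · refine Measurable.aestronglyMeasurable ?_
    have := hD.1
    fun_prop
  · rcases lt_or_ge ‖z‖ δ with h | h
    · rw [hδD z h]; simp; positivity
    · have hz : 0 < ‖z‖ := hδ.trans_le h
      set N := (n : ℝ) + 2 * σ with hN
      have hN0 : 0 < N := by positivity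
      rw [norm_div, Real.norm_of_nonneg (by positivity : 0 ≤ ‖z‖ ^ N), Real.norm_eq_abs]
      have h1 : (1 + ‖z‖) ≤ (1 + 1 / δ) * ‖z‖ := by
        have : 1 ≤ 1 / δ * ‖z‖ := by
          rw [one_div, inv_mul_eq_div, le_div_iff₀ hδ]; linarith
        linarith
      have h2 : (1 + ‖z‖) ^ N ≤ (1 + 1 / δ) ^ N * ‖z‖ ^ N := by
        rw [← Real.mul_rpow (by positivity) (by positivity)]
        exact Real.rpow_le_rpow (by positivity) h1 hN0.le
      have h3 : 1 + ‖z‖ ^ p ≤ 2 * (1 + ‖z‖) ^ p := by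
        have q1 : ‖z‖ ^ p ≤ (1 + ‖z‖) ^ p := Real.rpow_le_rpow (by positivity) (by linarith) hp.le
        have q2 : 1 ≤ (1 + ‖z‖) ^ p := Real.one_le_rpow (by linarith) hp.le
        linarith
      have h4 : (1 + ‖z‖) ^ (-(N - p)) = (1 + ‖z‖) ^ p / (1 + ‖z‖) ^ N := by
        rw [← Real.rpow_sub (by positivity)]; congr 1; ring
      rw [h4, div_le_iff₀ (by positivity)]
      have h5 := hD.2 z
      have h6 : 0 < (1 + ‖z‖) ^ N := by positivity
      calc |D z| ≤ C * (1 + ‖z‖ ^ p) := h5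
        _ ≤ C * (2 * (1 + ‖z‖) ^ p) := by gcongr
        _ = C * 2 * ((1 + ‖z‖) ^ p / (1 + ‖z‖) ^ N) * (1 + ‖z‖) ^ N := by field_simp
        _ ≤ C * 2 * ((1 + ‖z‖) ^ p / (1 + ‖z‖) ^ N) * ((1 + 1 / δ) ^ N * ‖z‖ ^ N) := by gcongr
        _ = _ := by ring

lemma sq_moment {p : ℝ} (hp : 0 < p) (hp2 : p < 2) {t : ℝ} (ht : 0 < t) :
    Integrable (fun y : EuclideanSpace ℝ (Fin n) => ‖y‖ ^ 2 * Gk n t y) ∧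
    ∫ y : EuclideanSpace ℝ (Fin n), ‖y‖ ^ 2 * Gk n t y ≤ t * Mo n p := by
  have hb : ∀ z : EuclideanSpace ℝ (Fin n), ‖√t • z‖ ^ 2 * Gk n 1 z ≤
      t * (((1 + ‖z‖ ^ p) * (1 + ‖z‖ ^ 2)) * Gk n 1 z) := fun z => by
    have hG := Gk_pos (n := n) one_pos z
    rw [norm_smul, mul_pow, Real.norm_eq_abs, sq_abs, Real.sq_sqrt ht.le, mul_assoc]
    refine mul_le_mul_of_nonneg_left (mul_le_mul_of_nonneg_right ?_ hG.le) ht.le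
    have h3 : 0 ≤ ‖z‖ ^ p := by positivity
    nlinarith [mul_nonneg h3 (sq_nonneg ‖z‖)]
  have hI := (weight_integrable (n := n) hp hp2 one_pos).const_mul t
  have hI2 : Integrable (fun z : EuclideanSpace ℝ (Fin n) => ‖√t • z‖ ^ 2 * Gk n 1 z) := by
    refine hI.mono' ?_ (Eventually.of_forall fun z => ?_)
    · refine Measurable.aestronglyMeasurable ?_
      have := Gk_measurable' (n := n) 1
      fun_prop
    · have hG := Gk_pos (n := n) one_pos z
      rw [Real.norm_of_nonneg (by positivity)]
      exact hb z
  refine ⟨(Gk_scale_integrable ht (fun y => ‖y‖ ^ 2)).1 hI2, ?_⟩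
  rw [Gk_scale ht (fun y => ‖y‖ ^ 2), Mo, ← integral_const_mul]
  exact integral_mono hI2 hI hb

lemma key_trunc {p σ C δ τ K : ℝ} (hp : 0 < p) (hp2 : p < 2) (hσ : 0 < σ) (hσ1 : σ < 1)
    (hpσ : p < 2 * σ) (hC : 0 ≤ C) (hK : 0 ≤ K)
    (hδ : 0 < δ) (hτ : 0 < τ) {D : EuclideanSpace ℝ (Fin n) → ℝ} (hD : Gr n p C D)
    (hδD : ∀ z, ‖z‖ < δ → D z = 0) (hDK : ∀ z, D z ≤ K * ‖z‖ ^ 2) :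
    kap n σ * ∫ z, D z / ‖z‖ ^ ((n : ℝ) + 2 * σ) ≤
      K * Mo n p * (τ ^ (1 - σ) / (1 - σ)) + ∫ t in Ioi τ, HU n D t 0 * t ^ (-1 - σ) := by
  have hD0 : D 0 = 0 := hδD 0 (by simpa using hδ)
  have e1 : kap n σ * ∫ z, D z / ‖z‖ ^ ((n : ℝ) + 2 * σ) =
      ∫ z, ∫ t in Ioi (0 : ℝ), D z * (Gk n t z * t ^ (-1 - σ)) := by
    rw [← integral_const_mul]
    congr 1; ext z
    rw [integral_const_mul]
    rcases eq_or_ne z 0 with rfl | hz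
    · simp [hD0]
    · rw [kernel_integral hz]; ring
  have hm : Measurable (Function.uncurry fun (z : EuclideanSpace ℝ (Fin n)) (t : ℝ) =>
      D z * (Gk n t z * t ^ (-1 - σ))) := by
    unfold Function.uncurry
    have h1 : Measurable (fun a : EuclideanSpace ℝ (Fin n) × ℝ => Gk n a.2 a.1) :=
      (Gk_measurable (n := n)).comp
        (by fun_prop : Measurable (fun a : EuclideanSpace ℝ (Fin n) × ℝ => (a.2, a.1)))
    have := hD.1
    fun_prop
  have hjoint : Integrable (Function.uncurry fun (z : EuclideanSpace ℝ (Fin n)) (t : ℝ) =>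
      D z * (Gk n t z * t ^ (-1 - σ))) (volume.prod (volume.restrict (Ioi 0))) := by
    rw [integrable_prod_iff hm.aestronglyMeasurable]
    refine ⟨Eventually.of_forall fun z => ?_, ?_⟩
    · rcases eq_or_ne z 0 with rfl | hz
      · simp [Function.uncurry, hD0]
      · exact (kernel_integrable hσ hz).const_mul (D z)
    · refine ((space_integrable hp hσ hpσ hC hδ hD hδD).norm.const_mul (kap n σ)).congr
        (Eventually.of_forall fun z => ?_)
      simp only [Function.uncurry]
      rcases eq_or_ne z 0 with rfl | hz
      · simp [hD0]
      · have : ∫ t in Ioi (0 : ℝ), ‖D z * (Gk n t z * t ^ (-1 - σ))‖ =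
            ∫ t in Ioi (0 : ℝ), ‖D z‖ * (Gk n t z * t ^ (-1 - σ)) := by
          refine setIntegral_congr_fun measurableSet_Ioi fun t ht => ?_
          have ht0 : (0 : ℝ) < t := ht
          have hG := Gk_pos (n := n) ht0 z
          rw [norm_mul, Real.norm_of_nonneg (by positivity : 0 ≤ Gk n t z * t ^ (-1 - σ))]
        rw [this, integral_const_mul, kernel_integral hz, norm_div,
          Real.norm_of_nonneg (by positivity : 0 ≤ ‖z‖ ^ ((n : ℝ) + 2 * σ))]
        ring
  rw [e1, integral_integral_swap hjoint]
  have e2 : ∀ t, ∫ z, D z * (Gk n t z * t ^ (-1 - σ)) = HU n D t 0 * t ^ (-1 - σ) := fun t => by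
    unfold HU
    rw [← integral_mul_const]
    congr 1; ext z; rw [zero_add]; ring
  have hjoint2 : IntegrableOn (fun t => HU n D t 0 * t ^ (-1 - σ)) (Ioi 0) := by
    have := hjoint.integral_prod_right
    refine Integrable.congr this (Eventually.of_forall fun t => ?_)
    exact e2 t
  simp_rw [e2]
  rw [← Ioc_union_Ioi_eq_Ioi hτ.le, setIntegral_union (Ioc_disjoint_Ioi le_rfl) measurableSet_Ioi
    (hjoint2.mono_set Ioc_subset_Ioi_self) (hjoint2.mono_set (Ioi_subset_Ioi hτ.le))]
  gcongr
  have h1 : IntegrableOn (fun t : ℝ => t ^ (-σ)) (Ioc 0 τ) :=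
    (intervalIntegrable_iff_integrableOn_Ioc_of_le hτ.le).1
      (intervalIntegral.intervalIntegrable_rpow' (by linarith))
  have h2 : ∫ t in Ioc 0 τ, t ^ (-σ) = τ ^ (1 - σ) / (1 - σ) := by
    rw [← intervalIntegral.integral_of_le hτ.le, integral_rpow (Or.inl (by linarith)),
      Real.zero_rpow (by linarith)]
    ring_nf
  rw [← h2, ← integral_const_mul]
  refine setIntegral_mono_on (hjoint2.mono_set Ioc_subset_Ioi_self) (h1.const_mul _)
    measurableSet_Ioc fun t ht => ?_
  have ht0 : 0 < t := ht.1
  have h3 : HU n D t 0 ≤ K * (t * Mo n p) := by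
    obtain ⟨q1, q2⟩ := sq_moment (n := n) hp hp2 ht0
    refine le_trans ?_ (mul_le_mul_of_nonneg_left q2 hK)
    rw [← integral_const_mul]
    unfold HU
    refine integral_mono (hD.integrable hp hp2 hC 0 ht0) (q1.const_mul _) fun z => ?_
    have hG := Gk_pos (n := n) ht0 z
    simp only [zero_add]
    rw [← mul_assoc]
    exact mul_le_mul_of_nonneg_right (hDK z) hG.le
  calc HU n D t 0 * t ^ (-1 - σ) ≤ K * (t * Mo n p) * t ^ (-1 - σ) :=
        mul_le_mul_of_nonneg_right h3 (by positivity)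
    _ = K * Mo n p * (t ^ (1 : ℝ) * t ^ (-1 - σ)) := by rw [Real.rpow_one]; ring
    _ = K * Mo n p * t ^ (-σ) := by rw [← Real.rpow_add ht0]; ring_nf

end FracLiou


namespace FracLiou

variable {n : ℕ}

lemma Gr.incr {p A : ℝ} (hp : 0 < p) (hp2 : p < 2) (hA : 0 ≤ A)
    {u : EuclideanSpace ℝ (Fin n) → ℝ} (hu : Gr n p A u) (y : EuclideanSpace ℝ (Fin n)) :
    Gr n p (5 * A * (1 + ‖y‖ ^ p)) (fun z => u (y + z) - u y) := by
  have hm := hu.1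
  refine ⟨by fun_prop, fun z => ?_⟩
  have h1 := hu.shift hp hp2 hA y z
  have h2 := hu.2 y
  have h3 : 0 ≤ A * (1 + ‖y‖ ^ p) * ‖z‖ ^ p := by positivity
  have h4 := abs_sub (u (y + z)) (u y)
  nlinarith

lemma Gr.symm {p A : ℝ} {E : EuclideanSpace ℝ (Fin n) → ℝ} (hE : Gr n p A E) :
    Gr n p A (fun z => (E z + E (-z)) / 2) := by
  have hm := hE.1
  refine ⟨by fun_prop, fun z => ?_⟩
  have h1 := abs_le.1 (hE.2 z)
  have h2 := abs_le.1 (hE.2 (-z))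
  rw [norm_neg] at h2
  rw [abs_le]
  constructor <;> linarith [h1.1, h1.2, h2.1, h2.2]

lemma HU_measurable_t {w : EuclideanSpace ℝ (Fin n) → ℝ} (hw : Measurable w)
    (x : EuclideanSpace ℝ (Fin n)) : Measurable (fun t : ℝ => HU n w t x) := by
  have h1 := HU_measurable hw
  have h2 : Measurable (fun t : ℝ => (t, x)) := by fun_prop
  exact h1.comp h2

/-- truncation near the origin -/
noncomputable def trc (δ : ℝ) (D : EuclideanSpace ℝ (Fin n) → ℝ) :
    EuclideanSpace ℝ (Fin n) → ℝ := {z | δ ≤ ‖z‖}.indicator D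

lemma trc_set (δ : ℝ) : MeasurableSet {z : EuclideanSpace ℝ (Fin n) | δ ≤ ‖z‖} :=
  measurableSet_le measurable_const measurable_norm

lemma trc_of_lt {δ : ℝ} (D : EuclideanSpace ℝ (Fin n) → ℝ) {z} (h : ‖z‖ < δ) : trc δ D z = 0 :=
  indicator_of_notMem (by simpa using h) D

lemma trc_of_le {δ : ℝ} (D : EuclideanSpace ℝ (Fin n) → ℝ) {z} (h : δ ≤ ‖z‖) : trc δ D z = D z :=
  indicator_of_mem (by simpa using h) D

lemma Gr.trc {p A : ℝ} (hA : 0 ≤ A) (δ : ℝ) {E : EuclideanSpace ℝ (Fin n) → ℝ} (hE : Gr n p A E) :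
    Gr n p A (trc δ E) := by
  refine ⟨hE.1.indicator (trc_set δ), fun z => ?_⟩
  rcases lt_or_ge ‖z‖ δ with h | h
  · rw [trc_of_lt _ h, abs_zero]; positivity
  · rw [trc_of_le _ h]; exact hE.2 z

lemma truncated_eq (σ : ℝ) (u : EuclideanSpace ℝ (Fin n) → ℝ) (y : EuclideanSpace ℝ (Fin n))
    (δ : ℝ) : truncatedFracLap n σ u y δ =
      ∫ z, trc δ (fun z => u (y + z) - u y) z / ‖z‖ ^ ((n : ℝ) + 2 * σ) := by
  unfold truncatedFracLap
  have hs : MeasurableSet {x : EuclideanSpace ℝ (Fin n) | δ ≤ dist x y} :=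
    measurableSet_le measurable_const (measurable_id.dist measurable_const)
  rw [← integral_indicator hs, ← integral_add_left_eq_self _ y]
  congr 1; ext z
  have hd : dist (y + z) y = ‖z‖ := by simp [dist_eq_norm]
  rcases lt_or_ge ‖z‖ δ with h | h
  · rw [trc_of_lt _ h, indicator_of_notMem (by simpa [hd] using h)]; simp
  · rw [trc_of_le _ h, indicator_of_mem (by simpa [hd] using h), hd]

lemma HU_symm_incr {p A : ℝ} (hp : 0 < p) (hp2 : p < 2) (hA : 0 ≤ A)
    {u : EuclideanSpace ℝ (Fin n) → ℝ} (hu : Gr n p A u) (y : EuclideanSpace ℝ (Fin n))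
    {t : ℝ} (ht : 0 < t) :
    HU n (fun z => ((u (y + z) - u y) + (u (y + -z) - u y)) / 2) t 0 = HU n u t y - u y := by
  have hI := (hu.integrable hp hp2 hA y ht).sub ((Gk_integrable (n := n) ht).const_mul (u y))
  have h0 : ∫ z, (u (y + z) - u y) * Gk n t z = HU n u t y - u y := by
    have := integral_sub (hu.integrable hp hp2 hA y ht)
      ((Gk_integrable (n := n) ht).const_mul (u y))
    rw [integral_const_mul, Gk_integral ht, mul_one] at this
    rw [HU, ← this]
    congr 1; ext z; ring
  have hI1 : Integrable (fun z => (u (y + z) - u y) * Gk n t z) :=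
    hI.congr (Eventually.of_forall fun z => by simp only [Pi.sub_apply]; ring)
  have hI2 : Integrable (fun z => (u (y + -z) - u y) * Gk n t z) := by
    refine hI1.comp_neg.congr (Eventually.of_forall fun z => ?_)
    simp only [Gk_neg]
  have h1 : ∫ z, (u (y + -z) - u y) * Gk n t z = HU n u t y - u y := by
    rw [← h0, ← integral_neg_eq_self (fun z => (u (y + z) - u y) * Gk n t z)]
    simp only [Gk_neg]
  have h2 := integral_add hI1 hI2
  rw [h0, h1] at h2
  unfold HU at h2 ⊢
  have h3 : ∀ a b : ℝ, a = (1 / 2) * b → 2 * a = b := by intro a b h; linarith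
  have : ∫ z, ((u (y + (0 + z)) - u y) + (u (y + -(0 + z)) - u y)) / 2 * Gk n t z =
      (1 / 2) * ∫ z, ((u (y + z) - u y) * Gk n t z + (u (y + -z) - u y) * Gk n t z) := by
    rw [← integral_const_mul]
    congr 1; ext z; rw [zero_add]; ring
  rw [this, h2]; ring

set_option maxHeartbeats 400000 in
lemma local_key {p σ A K τ : ℝ} (hp : 0 < p) (hp2 : p < 2) (hσ : 0 < σ) (hσ1 : σ < 1)
    (hpσ : p < 2 * σ) (hA : 0 ≤ A) (hK : 0 ≤ K) (hτ : 0 < τ)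
    {u : EuclideanSpace ℝ (Fin n) → ℝ} (hu : Gr n p A u) (y q : EuclideanSpace ℝ (Fin n))
    (hup : ∀ z, u (y + z) - u y ≤ ⟪q, z⟫ + K * ‖z‖ ^ 2) {L : ℝ}
    (hL : Tendsto (truncatedFracLap n σ u y) (𝓝[>] 0) (𝓝 L)) (hL0 : 0 ≤ L) :
    -(K * Mo n p * (τ ^ (1 - σ) / (1 - σ))) ≤
      ∫ t in Ioi τ, (HU n u t y - u y) * t ^ (-1 - σ) := by
  set E : EuclideanSpace ℝ (Fin n) → ℝ := fun z => u (y + z) - u y with hEdef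
  set C := 5 * A * (1 + ‖y‖ ^ p) with hCdef
  have hC : 0 ≤ C := by positivity
  have hE : Gr n p C E := hu.incr hp hp2 hA y
  set D : EuclideanSpace ℝ (Fin n) → ℝ := fun z => (E z + E (-z)) / 2 with hDdef
  have hD : Gr n p C D := hE.symm
  have hDK : ∀ z, D z ≤ K * ‖z‖ ^ 2 := fun z => by
    have h1 := hup z
    have h2 := hup (-z)
    rw [inner_neg_right, norm_neg] at h2
    simp only [hDdef, hEdef]; linarith
  have hkey : ∀ δ : ℝ, 0 < δ → kap n σ * truncatedFracLap n σ u y δ ≤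
      K * Mo n p * (τ ^ (1 - σ) / (1 - σ)) + ∫ t in Ioi τ, HU n (trc δ D) t 0 * t ^ (-1 - σ) := by
    intro δ hδ
    have h := key_trunc hp hp2 hσ hσ1 hpσ hC hK hδ hτ (hD.trc hC δ) (fun z hz => trc_of_lt D hz)
      (fun z => by
        rcases lt_or_ge ‖z‖ δ with h | h
        · rw [trc_of_lt _ h]; positivity
        · rw [trc_of_le _ h]; exact hDK z)
    refine le_trans (le_of_eq ?_) h
    congr 1
    rw [truncated_eq]
    have hI := space_integrable hp hσ hpσ hC hδ (hE.trc hC δ) (fun z hz => trc_of_lt E hz)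
    have h2 := integral_add hI hI.comp_neg
    rw [integral_neg_eq_self (fun z => trc δ E z / ‖z‖ ^ ((n : ℝ) + 2 * σ))] at h2
    have h3 : ∫ z, trc δ D z / ‖z‖ ^ ((n : ℝ) + 2 * σ) = (1 / 2) *
        ∫ z, (trc δ E z / ‖z‖ ^ ((n : ℝ) + 2 * σ) + trc δ E (-z) / ‖-z‖ ^ ((n : ℝ) + 2 * σ)) := by
      rw [← integral_const_mul]
      congr 1; ext z
      rcases lt_or_ge ‖z‖ δ with h | h
      · rw [trc_of_lt _ h, trc_of_lt _ h, trc_of_lt _ (by rwa [norm_neg])]; simp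
      · rw [trc_of_le _ h, trc_of_le _ h, trc_of_le _ (by rwa [norm_neg]), norm_neg]
        simp only [hDdef]; ring
    rw [h3, h2]; ring
  have hlim : Tendsto (fun δ => ∫ t in Ioi τ, HU n (trc δ D) t 0 * t ^ (-1 - σ)) (𝓝[>] 0)
      (𝓝 (∫ t in Ioi τ, HU n D t 0 * t ^ (-1 - σ))) := by
    refine tendsto_integral_filter_of_dominated_convergence
      (fun t => (4 * C * (1 + ‖(0 : EuclideanSpace ℝ (Fin n))‖ ^ p)) * Mo n p *
        ((1 + t ^ (p / 2)) * t ^ (-1 - σ))) ?_ ?_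
      ((tail_integrable hτ hσ hpσ).const_mul _) ?_
    · refine Eventually.of_forall fun δ => Measurable.aestronglyMeasurable ?_
      have h1 : Measurable (fun t : ℝ => HU n (trc δ D) t 0) :=
        HU_measurable_t (hD.trc hC δ).1 0
      exact h1.mul (by fun_prop)
    · refine Eventually.of_forall fun δ => (ae_restrict_iff' measurableSet_Ioi).2
        (Eventually.of_forall fun t ht => ?_)
      have ht0 : 0 < t := hτ.trans ht
      rw [norm_mul, Real.norm_of_nonneg (by positivity : 0 ≤ t ^ (-1 - σ)), Real.norm_eq_abs]
      calc _ ≤ _ := mul_le_mul_of_nonneg_right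
            ((hD.trc hC δ).HU_le hp hp2 hC 0 ht0) (by positivity)
        _ = _ := by ring
    · refine (ae_restrict_iff' measurableSet_Ioi).2 (Eventually.of_forall fun t ht => ?_)
      have ht0 : 0 < t := hτ.trans ht
      refine Tendsto.mul_const _ ?_
      refine HU_tendsto hp hp2 hC (Eventually.of_forall fun δ => hD.trc hC δ) (fun z => ?_) ht0 0
      rcases eq_or_ne z 0 with rfl | hz
      · have hD0 : D 0 = 0 := by simp [hDdef, hEdef]
        rw [hD0]
        refine tendsto_const_nhds.congr' ?_
        filter_upwards [self_mem_nhdsWithin] with δ hδ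
        rw [trc_of_lt _ (by simpa using hδ)]
      · refine tendsto_const_nhds.congr' ?_
        have : ∀ᶠ δ in 𝓝[>] (0 : ℝ), δ < ‖z‖ :=
          nhdsWithin_le_nhds (Iio_mem_nhds (norm_pos_iff.2 hz))
        filter_upwards [this] with δ hδ
        rw [trc_of_le _ hδ.le]
  have hfin : kap n σ * L ≤ K * Mo n p * (τ ^ (1 - σ) / (1 - σ)) +
      ∫ t in Ioi τ, HU n D t 0 * t ^ (-1 - σ) :=
    le_of_tendsto_of_tendsto (hL.const_mul _) (hlim.const_add _)
      (by filter_upwards [self_mem_nhdsWithin] with δ hδ using hkey δ hδ)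
  have hE2 : ∫ t in Ioi τ, HU n D t 0 * t ^ (-1 - σ) =
      ∫ t in Ioi τ, (HU n u t y - u y) * t ^ (-1 - σ) := by
    refine setIntegral_congr_fun measurableSet_Ioi fun t ht => ?_
    have := HU_symm_incr hp hp2 hA hu y (hτ.trans ht)
    change HU n D t 0 = _ at this
    simp only [this]
  rw [hE2] at hfin
  have := mul_nonneg (kap_pos (n := n) hσ).le hL0
  linarith

end FracLiou


namespace FracLiou

variable {n : ℕ}

lemma supconv {p ε : ℝ} (hp : 0 < p) (hp2 : p < 2) (hε : 0 < ε) (hε8 : ε ≤ 1 / 8)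
    {u : EuclideanSpace ℝ (Fin n) → ℝ} (hu : Continuous u) (hg : ∀ x, |u x| ≤ 1 + ‖x‖ ^ p) :
    ∃ (w : EuclideanSpace ℝ (Fin n) → ℝ) (Y : EuclideanSpace ℝ (Fin n) → EuclideanSpace ℝ (Fin n)),
      (∀ x, w x = u (Y x) - ‖x - Y x‖ ^ 2 / ε) ∧ (∀ x y, u y - ‖x - y‖ ^ 2 / ε ≤ w x) ∧
      Gr n p 5 w ∧ ∀ x, ‖x - Y x‖ ^ 2 ≤ 2 * ε * (6 + 5 * ‖x‖ ^ p) := by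
  have hb : ∀ x y, u y ≤ 5 + 4 * ‖x‖ ^ p + 4 * ‖x - y‖ ^ 2 := fun x y => by
    have h1 := (abs_le.1 (hg y)).2
    have h2 := norm_add_rpow hp hp2 x (y - x)
    rw [add_sub_cancel] at h2
    have h3 : ‖y - x‖ ^ p ≤ 1 + ‖y - x‖ ^ 2 := rpow_le_one_add_sq (norm_nonneg _) hp hp2
    rw [norm_sub_rev y x] at h2 h3
    linarith
  have h8 : 8 ≤ 1 / ε := by rw [le_div_iff₀ hε]; linarith
  have hb2 : ∀ x y, u y - ‖x - y‖ ^ 2 / ε ≤ 5 + 4 * ‖x‖ ^ p - (1 / (2 * ε)) * ‖x - y‖ ^ 2 :=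
    fun x y => by
    have h1 := hb x y
    have h2 : ‖x - y‖ ^ 2 / ε = 2 * ((1 / (2 * ε)) * ‖x - y‖ ^ 2) := by field_simp
    have h3 : 4 * ‖x - y‖ ^ 2 ≤ (1 / (2 * ε)) * ‖x - y‖ ^ 2 := by
      refine mul_le_mul_of_nonneg_right ?_ (sq_nonneg _)
      rw [le_div_iff₀ (by positivity)]; linarith
    linarith
  have hmax : ∀ x, ∃ y, ∀ y', u y' - ‖x - y'‖ ^ 2 / ε ≤ u y - ‖x - y‖ ^ 2 / ε := by
    intro x
    have hc : Continuous (fun y => u y - ‖x - y‖ ^ 2 / ε) := by fun_prop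
    refine hc.exists_forall_ge' x ?_
    have hT : Tendsto (fun y : EuclideanSpace ℝ (Fin n) => ‖x - y‖) (cocompact _) atTop := by
      have := tendsto_dist_right_cocompact_atTop x
      refine this.congr fun y => ?_
      rw [dist_comm, dist_eq_norm]
    have hT2 : Tendsto (fun y : EuclideanSpace ℝ (Fin n) => (1 / (2 * ε)) * ‖x - y‖ ^ 2)
        (cocompact _) atTop :=
      ((tendsto_pow_atTop two_ne_zero).comp hT).const_mul_atTop (by positivity)
    filter_upwards [hT2.eventually_ge_atTop (5 + 4 * ‖x‖ ^ p - u x)] with y hy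
    have := hb2 x y
    simp only [sub_self, norm_zero]
    norm_num
    linarith
  choose Y hY using hmax
  have hlow : ∀ x, u x ≤ u (Y x) - ‖x - Y x‖ ^ 2 / ε := fun x => by
    have := hY x x
    simpa using this
  refine ⟨fun x => u (Y x) - ‖x - Y x‖ ^ 2 / ε, Y, fun x => rfl, fun x y => hY x y, ⟨?_, ?_⟩, ?_⟩
  · refine measurable_of_Ioi fun a => ?_
    have : (fun x => u (Y x) - ‖x - Y x‖ ^ 2 / ε) ⁻¹' Ioi a =
        ⋃ y, {x | a < u y - ‖x - y‖ ^ 2 / ε} := by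
      ext x
      simp only [mem_preimage, mem_Ioi, mem_iUnion, mem_ofPred_eq]
      exact ⟨fun h => ⟨Y x, h⟩, fun ⟨y, h⟩ => h.trans_le (hY x y)⟩
    rw [this]
    refine IsOpen.measurableSet (isOpen_iUnion fun y => ?_)
    exact isOpen_lt continuous_const (by fun_prop)
  · intro x
    have h1 := hlow x
    have h2 := hb2 x (Y x)
    have h3 := (abs_le.1 (hg x)).1
    have h4 : 0 ≤ ‖x‖ ^ p := by positivity
    have h5 : 0 ≤ (1 / (2 * ε)) * ‖x - Y x‖ ^ 2 := by positivity
    rw [abs_le]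
    constructor <;> linarith
  · intro x
    have h1 := hlow x
    have h2 := hb2 x (Y x)
    have h3 := (abs_le.1 (hg x)).1
    have h5 : (1 / (2 * ε)) * ‖x - Y x‖ ^ 2 ≤ 6 + 5 * ‖x‖ ^ p := by linarith
    rw [one_div, inv_mul_le_iff₀ (by positivity)] at h5
    linarith

lemma HU_tail_integrable {p σ A τ : ℝ} (hp : 0 < p) (hp2 : p < 2) (hσ : 0 < σ)
    (hpσ : p < 2 * σ) (hA : 0 ≤ A) (hτ : 0 < τ)
    {w : EuclideanSpace ℝ (Fin n) → ℝ} (hw : Gr n p A w) (x : EuclideanSpace ℝ (Fin n)) (c : ℝ) :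
    IntegrableOn (fun t => (HU n w t x - c) * t ^ (-1 - σ)) (Ioi τ) := by
  have h1 : IntegrableOn (fun t : ℝ => t ^ (-1 - σ)) (Ioi τ) :=
    (integrableOn_Ioi_rpow_iff hτ).2 (by linarith)
  have h2 : IntegrableOn (fun t => HU n w t x * t ^ (-1 - σ)) (Ioi τ) := by
    refine ((tail_integrable hτ hσ hpσ).const_mul (4 * A * (1 + ‖x‖ ^ p) * Mo n p)).mono' ?_ ?_
    · exact ((HU_measurable_t hw.1 x).mul (by fun_prop)).aestronglyMeasurable
    · refine (ae_restrict_iff' measurableSet_Ioi).2 (Eventually.of_forall fun t ht => ?_)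
      have ht0 : 0 < t := hτ.trans ht
      rw [norm_mul, Real.norm_of_nonneg (by positivity : 0 ≤ t ^ (-1 - σ)), Real.norm_eq_abs]
      calc _ ≤ _ := mul_le_mul_of_nonneg_right (hw.HU_le hp hp2 hA x ht0) (by positivity)
        _ = _ := by ring
  refine (h2.sub (h1.const_mul c)).congr (Eventually.of_forall fun t => ?_)
  simp only [Pi.sub_apply]; ring

lemma supconv_ineq {p σ ε τ : ℝ} (hp : 0 < p) (hp2 : p < 2) (hσ : 0 < σ) (hσ1 : σ < 1)
    (hpσ : p < 2 * σ) (hε : 0 < ε) (hτ : 0 < τ)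
    {u : EuclideanSpace ℝ (Fin n) → ℝ} (hu : Continuous u) (hg : ∀ x, |u x| ≤ 1 + ‖x‖ ^ p)
    (hsub : ∀ y φ, TouchesAbove n u φ y →
      ∃ L : ℝ, Tendsto (truncatedFracLap n σ u y) (nhdsWithin 0 (Set.Ioi 0)) (𝓝 L) ∧ 0 ≤ L)
    {w : EuclideanSpace ℝ (Fin n) → ℝ} {Y : EuclideanSpace ℝ (Fin n) → EuclideanSpace ℝ (Fin n)}
    (hw : ∀ x, w x = u (Y x) - ‖x - Y x‖ ^ 2 / ε) (hwY : ∀ x y, u y - ‖x - y‖ ^ 2 / ε ≤ w x)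
    (hwG : Gr n p 5 w) (x : EuclideanSpace ℝ (Fin n)) :
    -((1 / ε) * Mo n p * (τ ^ (1 - σ) / (1 - σ))) ≤
      ∫ t in Ioi τ, (HU n w t x - w x) * t ^ (-1 - σ) := by
  have huG : Gr n p 1 u := ⟨hu.measurable, fun x => by simpa using hg x⟩
  set y := Y x with hy
  have htouch : TouchesAbove n u
      (fun y' => u y - ‖x - y‖ ^ 2 / ε + ‖x - y'‖ ^ 2 / ε) y := by
    refine ⟨?_, by simp, 1, one_pos, fun y' _ => ?_⟩
    · refine contDiff_const.add (ContDiff.div_const ?_ _)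
      exact (contDiff_const.sub contDiff_id).norm_sq ℝ
    · have := hwY x y'
      rw [hw x] at this
      linarith
  obtain ⟨L, hL, hL0⟩ := hsub y _ htouch
  have hup : ∀ z, u (y + z) - u y ≤ ⟪(-2 / ε) • (x - y), z⟫ + (1 / ε) * ‖z‖ ^ 2 := fun z => by
    have h1 := hwY x (y + z)
    rw [hw x, ← hy, ← sub_sub, norm_sub_sq_real] at h1
    rw [real_inner_smul_left]
    have e : (‖x - y‖ ^ 2 - 2 * ⟪x - y, z⟫ + ‖z‖ ^ 2) / ε =
      ‖x - y‖ ^ 2 / ε + (-2 / ε * ⟪x - y, z⟫ + 1 / ε * ‖z‖ ^ 2) := by ring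
    rw [e] at h1
    linarith
  have hk := local_key hp hp2 hσ hσ1 hpσ zero_le_one (by positivity) hτ huG y _ hup hL hL0
  refine hk.trans ?_
  refine setIntegral_mono_on (HU_tail_integrable hp hp2 hσ hpσ zero_le_one hτ huG y _)
    (HU_tail_integrable hp hp2 hσ hpσ (by norm_num) hτ hwG x _) measurableSet_Ioi fun t ht => ?_
  have ht0 : 0 < t := hτ.trans ht
  refine mul_le_mul_of_nonneg_right ?_ (by positivity)
  have h1 := (Gk_integrable (n := n) ht0).const_mul (w x - u y)
  have h2 := huG.integrable hp hp2 zero_le_one y ht0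
  have h3 := hwG.integrable hp hp2 (by norm_num) x ht0
  have h4 : ∫ z, (u (y + z) * Gk n t z + (w x - u y) * Gk n t z) ≤ ∫ z, w (x + z) * Gk n t z := by
    refine integral_mono (h2.add h1) h3 fun z => ?_
    have hG := Gk_pos (n := n) ht0 z
    simp only
    rw [← add_mul]
    refine mul_le_mul_of_nonneg_right ?_ hG.le
    have h5 := hwY (x + z) (y + z)
    rw [add_sub_add_right_eq_sub] at h5
    have h6 := hw x
    rw [← hy] at h6
    linarith
  rw [integral_add h2 h1, integral_const_mul, Gk_integral ht0, mul_one] at h4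
  unfold HU
  linarith

lemma Gr.HU {p A t : ℝ} (hp : 0 < p) (hp2 : p < 2) (hA : 0 ≤ A) (ht : 0 < t)
    {w : EuclideanSpace ℝ (Fin n) → ℝ} (hw : Gr n p A w) :
    Gr n p (4 * A * ((1 + t ^ (p / 2)) * Mo n p)) (HU n w t) := by
  refine ⟨?_, fun x => ?_⟩
  · have h1 := HU_measurable hw.1
    have h2 : Measurable (fun x : EuclideanSpace ℝ (Fin n) => (t, x)) := by fun_prop
    exact h1.comp h2
  · refine (hw.HU_le hp hp2 hA x ht).trans (le_of_eq ?_)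
    ring

lemma conv_integrable {p σ A τ s : ℝ} (hp : 0 < p) (hp2 : p < 2) (hσ : 0 < σ)
    (hpσ : p < 2 * σ) (hA : 0 ≤ A) (hτ : 0 < τ) (hs : 0 < s)
    {w : EuclideanSpace ℝ (Fin n) → ℝ} (hw : Gr n p A w) (x : EuclideanSpace ℝ (Fin n)) :
    Integrable (Function.uncurry fun (y : EuclideanSpace ℝ (Fin n)) (t : ℝ) =>
      (HU n w t (x + y) - w (x + y)) * t ^ (-1 - σ) * Gk n s y)
      (volume.prod (volume.restrict (Ioi τ))) := by
  have hB := ((moment_integrable (n := n) hp hp2 hs).mul_prod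
    (tail_integrable hτ hσ hpσ)).const_mul (4 * A * (1 + ‖x‖ ^ p) * (4 * Mo n p + 1))
  have hmem : ∀ᵐ q ∂((volume : Measure (EuclideanSpace ℝ (Fin n))).prod
      (volume.restrict (Ioi τ))), q.2 ∈ Ioi τ := by
    have : ∀ᵐ t ∂(volume.restrict (Ioi τ)), t ∈ Ioi τ := ae_restrict_mem measurableSet_Ioi
    exact Measure.quasiMeasurePreserving_snd.ae this
  refine hB.mono' ?_ ?_
  · have h1 := HU_measurable hw.1
    have h2 : Measurable (fun q : EuclideanSpace ℝ (Fin n) × ℝ => (q.2, x + q.1)) := by fun_prop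
    have h3 : Measurable (fun q : EuclideanSpace ℝ (Fin n) × ℝ => HU n w q.2 (x + q.1)) :=
      h1.comp h2
    have h4 : Measurable (fun q : EuclideanSpace ℝ (Fin n) × ℝ => w (x + q.1)) := by
      have := hw.1
      fun_prop
    have h5 : Measurable (fun q : EuclideanSpace ℝ (Fin n) × ℝ => Gk n s q.1) :=
      (Gk_measurable' s).comp measurable_fst
    have h6 : Measurable (fun q : EuclideanSpace ℝ (Fin n) × ℝ => q.2 ^ (-1 - σ)) := by fun_prop
    exact (((h3.sub h4).mul h6).mul h5).aestronglyMeasurable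
  · filter_upwards [hmem] with q hq
    obtain ⟨y, t⟩ := q
    have ht0 : 0 < t := hτ.trans hq
    have hG := Gk_pos (n := n) hs y
    simp only [Function.uncurry]
    rw [norm_mul, norm_mul, Real.norm_of_nonneg (by positivity : 0 ≤ t ^ (-1 - σ)),
      Real.norm_of_nonneg hG.le, Real.norm_eq_abs]
    have h1 := hw.HU_le hp hp2 hA (x + y) ht0
    have h2 := hw.2 (x + y)
    have h3 := norm_add_rpow hp hp2 x y
    have hM := Mo_nonneg (n := n) p
    have hX : 0 ≤ ‖x‖ ^ p := by positivity
    have hYp : 0 ≤ ‖y‖ ^ p := by positivity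
    have hT : 0 ≤ t ^ (p / 2) := by positivity
    have h4 : A * (1 + ‖x + y‖ ^ p) ≤ 4 * A * (1 + ‖x‖ ^ p) * (1 + ‖y‖ ^ p) := by
      have : 1 + ‖x + y‖ ^ p ≤ 4 * (1 + ‖x‖ ^ p) * (1 + ‖y‖ ^ p) := by
        nlinarith [mul_nonneg hX hYp]
      calc _ ≤ A * (4 * (1 + ‖x‖ ^ p) * (1 + ‖y‖ ^ p)) := mul_le_mul_of_nonneg_left this hA
        _ = _ := by ring
    set Q := 4 * A * (1 + ‖x‖ ^ p) * (1 + ‖y‖ ^ p) with hQ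
    have hQ0 : 0 ≤ Q := by positivity
    have h5 : |HU n w t (x + y) - w (x + y)| ≤ Q * (4 * Mo n p + 1) * (1 + t ^ (p / 2)) := by
      have a1 := abs_sub (HU n w t (x + y)) (w (x + y))
      have a2 : 4 * A * (1 + ‖x + y‖ ^ p) * ((1 + t ^ (p / 2)) * Mo n p) ≤
          4 * Q * ((1 + t ^ (p / 2)) * Mo n p) := by
        refine mul_le_mul_of_nonneg_right ?_ (by positivity)
        linarith
      have a3 : 0 ≤ Q * t ^ (p / 2) := by positivity
      nlinarith
    have h6 : Q * (4 * Mo n p + 1) * (1 + t ^ (p / 2)) ≤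
        Q * (4 * Mo n p + 1) * (1 + t ^ (p / 2)) * (1 + ‖y‖ ^ 2 / s) := by
      refine le_mul_of_one_le_right (by positivity) ?_
      have : 0 ≤ ‖y‖ ^ 2 / s := by positivity
      linarith
    calc |HU n w t (x + y) - w (x + y)| * t ^ (-1 - σ) * Gk n s y
        ≤ Q * (4 * Mo n p + 1) * (1 + t ^ (p / 2)) * (1 + ‖y‖ ^ 2 / s) * t ^ (-1 - σ) *
          Gk n s y := by
          refine mul_le_mul_of_nonneg_right (mul_le_mul_of_nonneg_right (h5.trans h6) ?_) hG.le
          positivity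
      _ = _ := by rw [hQ]; ring

lemma conv_ineq {p σ A τ s c : ℝ} (hp : 0 < p) (hp2 : p < 2) (hσ : 0 < σ)
    (hpσ : p < 2 * σ) (hA : 0 ≤ A) (hτ : 0 < τ) (hs : 0 < s)
    {w : EuclideanSpace ℝ (Fin n) → ℝ} (hw : Gr n p A w)
    (h : ∀ x, c ≤ ∫ t in Ioi τ, (HU n w t x - w x) * t ^ (-1 - σ))
    (x : EuclideanSpace ℝ (Fin n)) :
    c ≤ ∫ t in Ioi τ, (HU n w (s + t) x - HU n w s x) * t ^ (-1 - σ) := by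
  have hI := conv_integrable hp hp2 hσ hpσ hA hτ hs hw x
  have hI1 := hI.integral_prod_left
  have h1 : ∫ y, c * Gk n s y ≤
      ∫ y, ∫ t in Ioi τ, (HU n w t (x + y) - w (x + y)) * t ^ (-1 - σ) * Gk n s y := by
    refine integral_mono ((Gk_integrable (n := n) hs).const_mul c) hI1 fun y => ?_
    simp only
    rw [integral_mul_const]
    exact mul_le_mul_of_nonneg_right (h (x + y)) (Gk_pos hs y).le
  rw [integral_const_mul, Gk_integral hs, mul_one, integral_integral_swap hI] at h1
  refine h1.trans (le_of_eq ?_)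
  refine setIntegral_congr_fun measurableSet_Ioi fun t ht => ?_
  have ht0 : 0 < t := hτ.trans ht
  have hM := Mo_nonneg (n := n) p
  have i1 := (hw.HU hp hp2 hA ht0).integrable hp hp2 (by positivity) x hs
  have i2 := hw.integrable hp hp2 hA x hs
  have i3 := integral_sub i1 i2
  rw [HU_semigroup hp hp2 hA hw x hs ht0] at i3
  change _ = _ - FracLiou.HU n w s x at i3
  rw [← i3, ← integral_mul_const]
  congr 1; ext y; ring

end FracLiou


namespace FracLiou

variable {n : ℕ}

/-- smoothed subsolution inequality -/
lemma sub_ineq {p σ s : ℝ} (hp : 0 < p) (hp2 : p < 2) (hσ : 0 < σ) (hσ1 : σ < 1)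
    (hpσ : p < 2 * σ) (hs : 0 < s)
    {u : EuclideanSpace ℝ (Fin n) → ℝ} (hu : Continuous u) (hg : ∀ x, |u x| ≤ 1 + ‖x‖ ^ p)
    (hsub : ∀ y φ, TouchesAbove n u φ y →
      ∃ L : ℝ, Tendsto (truncatedFracLap n σ u y) (nhdsWithin 0 (Set.Ioi 0)) (𝓝 L) ∧ 0 ≤ L)
    (x : EuclideanSpace ℝ (Fin n)) :
    0 ≤ ∫ t in Ioi (0 : ℝ), (HU n u (s + t) x - HU n u s x) * t ^ (-1 - σ) := by
  set e : ℕ → ℝ := fun k => 1 / ((k : ℝ) + 8) with he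
  have he0 : ∀ k, 0 < e k := fun k => by simp only [he]; positivity
  have he8 : ∀ k, e k ≤ 1 / 8 := fun k => by
    simp only [he]
    refine one_div_le_one_div_of_le (by norm_num) ?_
    have : (0 : ℝ) ≤ k := Nat.cast_nonneg k
    linarith
  have hlim : Tendsto e atTop (𝓝 0) := by
    simp only [he]
    refine Tendsto.div_atTop tendsto_const_nhds ?_
    exact tendsto_atTop_add_const_right _ _ tendsto_natCast_atTop_atTop
  set r : ℕ → ℝ := fun k => e k ^ (2 / (1 - σ)) with hr
  have h1σ : 0 < 1 - σ := by linarith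
  have hr0 : ∀ k, 0 < r k := fun k => Real.rpow_pos_of_pos (he0 k) _
  have hrlim : Tendsto r atTop (𝓝 0) := by
    have h := hlim.rpow_const (p := 2 / (1 - σ)) (Or.inr (by positivity))
    rwa [Real.zero_rpow (by positivity)] at h
  have hrs : ∀ k, r k ^ (1 - σ) = e k ^ 2 := fun k => by
    simp only [hr]
    rw [← Real.rpow_mul (he0 k).le, div_mul_cancel₀ _ h1σ.ne', Real.rpow_two]
  choose W Y hW hWY hWG hY using fun k => supconv hp hp2 (he0 k) (he8 k) hu hg
  have hineq : ∀ k, -((1 / e k) * Mo n p * (r k ^ (1 - σ) / (1 - σ))) ≤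
      ∫ t in Ioi (r k), (HU n (W k) (s + t) x - HU n (W k) s x) * t ^ (-1 - σ) := fun k =>
    conv_ineq hp hp2 hσ hpσ (by norm_num) (hr0 k) hs (hWG k)
      (fun x => supconv_ineq hp hp2 hσ hσ1 hpσ (he0 k) (hr0 k) hu hg hsub (hW k) (hWY k)
        (hWG k) x) x
  have hL : Tendsto (fun k => -((1 / e k) * Mo n p * (r k ^ (1 - σ) / (1 - σ)))) atTop (𝓝 0) := by
    have h1 : Tendsto (fun k => -(e k * (Mo n p / (1 - σ)))) atTop (𝓝 0) := by
      have := (hlim.mul_const (Mo n p / (1 - σ))).neg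
      simpa using this
    refine h1.congr fun k => ?_
    rw [hrs]
    have := (he0 k).ne'
    field_simp
  have hpt : ∀ y, Tendsto (fun k => W k y) atTop (𝓝 (u y)) := fun y => by
    have h1 : Tendsto (fun k => ‖y - Y k y‖ ^ 2) atTop (𝓝 0) := by
      refine squeeze_zero (fun k => sq_nonneg _) (fun k => hY k y) ?_
      have := ((hlim.const_mul 2).mul_const (6 + 5 * ‖y‖ ^ p))
      simpa using this
    have h2 : Tendsto (fun k => Y k y) atTop (𝓝 y) := by
      rw [tendsto_iff_norm_sub_tendsto_zero]
      have := h1.sqrt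
      simp only [Real.sqrt_zero, Real.sqrt_sq (norm_nonneg _)] at this
      refine this.congr fun k => norm_sub_rev _ _
    refine tendsto_of_tendsto_of_tendsto_of_le_of_le tendsto_const_nhds
      ((hu.tendsto y).comp h2) (fun k => ?_) (fun k => ?_)
    · have := hWY k y y
      simpa using this
    · have h3 := hW k y
      have h4 : 0 ≤ ‖y - Y k y‖ ^ 2 / e k := div_nonneg (sq_nonneg _) (he0 k).le
      simp only [Function.comp_apply]
      linarith
  have hR : Tendsto (fun k => ∫ t in Ioi (0 : ℝ), (Ioi (r k)).indicator
      (fun t => (HU n (W k) (s + t) x - HU n (W k) s x) * t ^ (-1 - σ)) t) atTop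
      (𝓝 (∫ t in Ioi (0 : ℝ), (HU n u (s + t) x - HU n u s x) * t ^ (-1 - σ))) := by
    refine tendsto_integral_of_dominated_convergence
      (fun t => bdC n p 5 s x * (bd p s t * t ^ (-1 - σ))) ?_
      ((bd_integrable hs hσ1 hpσ).const_mul _) ?_ ?_
    · intro k
      exact (HU_diff_integrable hp hp2 (by norm_num) hσ1 hpσ (hWG k) x
        hs).aestronglyMeasurable.indicator measurableSet_Ioi
    · intro k
      refine (ae_restrict_iff' measurableSet_Ioi).2 (Eventually.of_forall fun t ht => ?_)
      have ht0 : (0 : ℝ) < t := ht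
      refine (norm_indicator_le_norm_self _ _).trans ?_
      rw [norm_mul, Real.norm_of_nonneg (by positivity : 0 ≤ t ^ (-1 - σ)), Real.norm_eq_abs,
        ← mul_assoc]
      exact mul_le_mul_of_nonneg_right (HU_diff_unif hp hp2 (by norm_num) (hWG k) x hs ht0)
        (by positivity)
    · refine (ae_restrict_iff' measurableSet_Ioi).2 (Eventually.of_forall fun t ht => ?_)
      have ht0 : (0 : ℝ) < t := ht
      have h1 := HU_tendsto hp hp2 (by norm_num) (Eventually.of_forall hWG) hpt
        (add_pos hs ht0) x
      have h2 := HU_tendsto hp hp2 (by norm_num) (Eventually.of_forall hWG) hpt hs x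
      refine ((h1.sub h2).mul_const (t ^ (-1 - σ))).congr' ?_
      filter_upwards [hrlim.eventually (gt_mem_nhds ht0)] with k hk
      rw [indicator_of_mem (by exact hk)]
  refine le_of_tendsto_of_tendsto' hL hR fun k => (hineq k).trans (le_of_eq ?_)
  rw [setIntegral_indicator measurableSet_Ioi, Ioi_inter_Ioi, sup_eq_right.2 (hr0 k).le]

lemma HU_neg (u : EuclideanSpace ℝ (Fin n) → ℝ) (t : ℝ) (x : EuclideanSpace ℝ (Fin n)) :
    HU n (fun y => -u y) t x = -HU n u t x := by
  unfold HU
  rw [← integral_neg]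
  congr 1; ext y; ring

lemma truncated_neg (σ : ℝ) (u : EuclideanSpace ℝ (Fin n) → ℝ) (y : EuclideanSpace ℝ (Fin n))
    (δ : ℝ) : truncatedFracLap n σ (fun y => -u y) y δ = -truncatedFracLap n σ u y δ := by
  unfold truncatedFracLap
  rw [← integral_neg]
  congr 1; ext z; ring

lemma heat_eq {p σ s : ℝ} (hp : 0 < p) (hp2 : p < 2) (hσ : 0 < σ) (hσ1 : σ < 1)
    (hpσ : p < 2 * σ) (hs : 0 < s)
    {u : EuclideanSpace ℝ (Fin n) → ℝ} (hu : Continuous u) (hg : ∀ x, |u x| ≤ 1 + ‖x‖ ^ p)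
    (hsuper : ∀ y φ, TouchesBelow n u φ y →
      ∃ L : ℝ, Tendsto (truncatedFracLap n σ u y) (nhdsWithin 0 (Set.Ioi 0)) (𝓝 L) ∧ L ≤ 0)
    (hsub : ∀ y φ, TouchesAbove n u φ y →
      ∃ L : ℝ, Tendsto (truncatedFracLap n σ u y) (nhdsWithin 0 (Set.Ioi 0)) (𝓝 L) ∧ 0 ≤ L)
    (x : EuclideanSpace ℝ (Fin n)) :
    ∫ t in Ioi (0 : ℝ), (HU n u (s + t) x - HU n u s x) * t ^ (-1 - σ) = 0 := by
  refine le_antisymm ?_ (sub_ineq hp hp2 hσ hσ1 hpσ hs hu hg hsub x)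
  have h := sub_ineq (u := fun y => -u y) hp hp2 hσ hσ1 hpσ hs hu.neg (fun x => by rw [abs_neg]; exact hg x)
    (fun y φ hφ => ?_) x
  · have e : ∫ t in Ioi (0 : ℝ), (HU n (fun y => -u y) (s + t) x - HU n (fun y => -u y) s x) *
        t ^ (-1 - σ) = -∫ t in Ioi (0 : ℝ), (HU n u (s + t) x - HU n u s x) * t ^ (-1 - σ) := by
      rw [← integral_neg]
      congr 1; ext t; rw [HU_neg, HU_neg]; ring
    rw [e] at h
    linarith
  · obtain ⟨h1, h2, r, hr, h3⟩ := hφ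
    obtain ⟨L, hL, hL0⟩ := hsuper y (fun z => -φ z) ⟨h1.neg, by simp only [h2, neg_neg], r, hr,
      fun z hz => by linarith [h3 z hz]⟩
    refine ⟨-L, ?_, by linarith⟩
    refine hL.neg.congr fun δ => (truncated_neg σ u y δ).symm

end FracLiou


namespace FracLiou

variable {n : ℕ}

lemma max_principle {σ : ℝ} {d : ℝ → ℝ} (hc : ContinuousOn d (Ioi 0))
    (hlim : Tendsto d atTop (𝓝 0))
    (hI : ∀ s, 0 < s → IntegrableOn (fun t => (d (s + t) - d s) * t ^ (-1 - σ)) (Ioi 0))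
    (h0 : ∀ s, 0 < s → ∫ t in Ioi (0 : ℝ), (d (s + t) - d s) * t ^ (-1 - σ) = 0)
    {s : ℝ} (hs : 0 < s) : d s ≤ 0 := by
  by_contra hcon
  have hpos : 0 < d s := not_le.1 hcon
  obtain ⟨S, hS⟩ := eventually_atTop.1 (hlim.eventually (gt_mem_nhds hpos))
  obtain ⟨s1, hs1, hmax⟩ := (isCompact_Icc (a := s) (b := max S s)).exists_isMaxOn
    ⟨s, le_rfl, le_max_right _ _⟩ (hc.mono fun r hr => lt_of_lt_of_le hs hr.1)
  have hge : d s ≤ d s1 := hmax (⟨le_rfl, le_max_right _ _⟩ : s ∈ Icc s (max S s))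
  have hall : ∀ r, s ≤ r → d r ≤ d s1 := fun r hr => by
    rcases le_total r (max S s) with h | h
    · exact hmax (⟨hr, h⟩ : r ∈ Icc s (max S s))
    · exact (hS r ((le_max_left _ _).trans h)).le.trans hge
  have hs10 : 0 < s1 := lt_of_lt_of_le hs hs1.1
  have hz : ∫ t in Ioi (0 : ℝ), (d s1 - d (s1 + t)) * t ^ (-1 - σ) = 0 := by
    have := h0 s1 hs10
    rw [← neg_eq_zero, ← integral_neg] at this
    refine Eq.trans ?_ this
    congr 1; ext t; ring
  have hI2 : IntegrableOn (fun t => (d s1 - d (s1 + t)) * t ^ (-1 - σ)) (Ioi 0) :=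
    (hI s1 hs10).neg.congr (Eventually.of_forall fun t => by simp only [Pi.neg_apply]; ring)
  rw [setIntegral_eq_zero_iff_of_nonneg_ae ((ae_restrict_iff' measurableSet_Ioi).2
    (Eventually.of_forall fun t ht => mul_nonneg
      (sub_nonneg.2 (hall _ (hs1.1.trans (by have : (0 : ℝ) < t := ht; linarith))))
      (Real.rpow_nonneg (le_of_lt ht) _))) hI2] at hz
  have hz2 : ∀ᵐ t ∂(volume.restrict (Ioi (max S 0))),
      (d s1 - d (s1 + t)) * t ^ (-1 - σ) = 0 :=
    ae_restrict_of_ae_restrict_of_subset (Ioi_subset_Ioi (le_max_right _ _)) hz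
  have hne : NeBot (ae (volume.restrict (Ioi (max S 0)))) := by
    rw [ae_neBot, Ne, Measure.restrict_eq_zero]
    simp
  obtain ⟨t, ht, htm⟩ := (hz2.and (ae_restrict_mem measurableSet_Ioi)).exists
  have ht1 : max S 0 < t := htm
  have ht0 : 0 < t := (le_max_right _ _).trans_lt ht1
  have htS : S < t := (le_max_left _ _).trans_lt ht1
  have h2 := hS (s1 + t) (by linarith)
  have h3 : 0 < t ^ (-1 - σ) := Real.rpow_pos_of_pos ht0 _
  have h4 : 0 < (d s1 - d (s1 + t)) * t ^ (-1 - σ) := mul_pos (by linarith) h3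
  linarith

lemma stationary {p σ A : ℝ} (hp : 0 < p) (hp2 : p < 2) (hσ1 : σ < 1)
    (hpσ : p < 2 * σ) (hA : 0 ≤ A)
    {u : EuclideanSpace ℝ (Fin n) → ℝ} (hc : Continuous u) (hu : Gr n p A u)
    (x : EuclideanSpace ℝ (Fin n))
    (h0 : ∀ s, 0 < s → ∫ t in Ioi (0 : ℝ), (HU n u (s + t) x - HU n u s x) * t ^ (-1 - σ) = 0)
    {s : ℝ} (hs : 0 < s) : HU n u s x = u x := by
  have hF := HU_cont hp hp2 hA hu hc x
  set F : ℝ → ℝ := fun t => ∫ z, u (x + √t • z) * Gk n 1 z with hFdef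
  have hFf : ∀ t, 0 < t → HU n u t x = F t := fun t ht => HU_scaled ht u x
  have hF0 : F 0 = u x := by
    simp only [hFdef, Real.sqrt_zero, zero_smul, add_zero]
    rw [integral_const_mul, Gk_integral one_pos, mul_one]
  have hconst : ∀ s h, 0 < s → 0 < h → HU n u (s + h) x = HU n u s x := by
    intro s h hs hh
    set d : ℝ → ℝ := fun s => HU n u (s + h) x - HU n u s x with hd
    have hdc : ContinuousOn d (Ioi 0) := by
      have h1 : ContinuousOn (fun s => F (s + h) - F s) (Ioi 0) :=
        Continuous.continuousOn (by fun_prop)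
      refine h1.congr fun r hr => ?_
      have hr0 : (0 : ℝ) < r := hr
      simp only [hd]
      rw [hFf r hr0, hFf (r + h) (by positivity)]
    have hdl : Tendsto d atTop (𝓝 0) := HU_diff_tendsto hp hp2 hA hu x hh.le
    have i : ∀ s, 0 < s → IntegrableOn
        (fun t => (HU n u (s + t) x - HU n u s x) * t ^ (-1 - σ)) (Ioi 0) := fun s hs =>
      HU_diff_integrable hp hp2 hA hσ1 hpσ hu x hs
    have hdd : ∀ s t : ℝ, (d (s + t) - d s) * t ^ (-1 - σ) =
        (HU n u (s + h + t) x - HU n u (s + h) x) * t ^ (-1 - σ) -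
        (HU n u (s + t) x - HU n u s x) * t ^ (-1 - σ) := fun s t => by
      simp only [hd]
      rw [add_right_comm s t h]; ring
    have hdI : ∀ s, 0 < s → IntegrableOn (fun t => (d (s + t) - d s) * t ^ (-1 - σ)) (Ioi 0) := by
      intro s hs
      simp_rw [hdd]
      exact (i (s + h) (by positivity)).sub (i s hs)
    have hd0 : ∀ s, 0 < s → ∫ t in Ioi (0 : ℝ), (d (s + t) - d s) * t ^ (-1 - σ) = 0 := by
      intro s hs
      simp_rw [hdd]
      rw [integral_sub (i (s + h) (by positivity)) (i s hs), h0 s hs, h0 (s + h) (by positivity),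
        sub_zero]
    have h1 := max_principle hdc hdl hdI hd0 hs
    have h2 := max_principle (d := fun s => -d s) (σ := σ) hdc.neg (by simpa using hdl.neg)
      (fun s hs => (hdI s hs).neg.congr (Eventually.of_forall fun t => by
        simp only [Pi.neg_apply]; ring))
      (fun s hs => by
        have := hd0 s hs
        rw [← neg_eq_zero, ← integral_neg] at this
        refine Eq.trans ?_ this
        congr 1; ext t; ring) hs
    simp only [hd] at h1 h2
    linarith
  have hl : Tendsto F (𝓝[>] 0) (𝓝 (F 0)) := (hF.tendsto 0).mono_left nhdsWithin_le_nhds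
  have hl2 : Tendsto F (𝓝[>] 0) (𝓝 (HU n u s x)) := by
    refine tendsto_const_nhds.congr' ?_
    have h1 : ∀ᶠ r in 𝓝[>] (0 : ℝ), r < s := nhdsWithin_le_nhds (Iio_mem_nhds hs)
    filter_upwards [h1, self_mem_nhdsWithin] with r hr hr0
    have hr1 : (0 : ℝ) < r := hr0
    have := hconst r (s - r) hr1 (by linarith)
    rw [add_sub_cancel] at this
    rw [this, hFf r hr1]
  rw [← hF0]
  exact tendsto_nhds_unique hl2 hl

lemma second_diff_pt {s : ℝ} (hs : 0 < s) (h y : EuclideanSpace ℝ (Fin n))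
    (hsh : 2 * ‖h‖ ^ 2 ≤ s) :
    |Gk n s (y - h) + Gk n s (y + h) - 2 * Gk n s y| ≤
      (2 * 2 ^ ((n : ℝ) / 2) * ‖h‖ ^ 2 / s) * ((1 + ‖y‖ ^ 2 / (2 * s)) * Gk n (2 * s) y) := by
  set a := ⟪y, h⟫ / s with ha
  set b := ‖h‖ ^ 2 / (2 * s) with hb
  set Q := ‖y‖ ^ 2 / (4 * s) with hQ
  have e1 : Gk n s (y - h) = Gk n s y * (Real.exp (-b) * Real.exp a) := by
    unfold Gk
    rw [← Real.exp_add, mul_assoc _ (Real.exp _) (Real.exp _), ← Real.exp_add, norm_sub_sq_real]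
    congr 2
    rw [ha, hb]; field_simp; ring
  have e2 : Gk n s (y + h) = Gk n s y * (Real.exp (-b) * Real.exp (-a)) := by
    unfold Gk
    rw [← Real.exp_add, mul_assoc _ (Real.exp _) (Real.exp _), ← Real.exp_add, norm_add_sq_real]
    congr 2
    rw [ha, hb]; field_simp; ring
  have e3 : Gk n s y * Real.exp Q = 2 ^ ((n : ℝ) / 2) * Gk n (2 * s) y := by
    unfold Gk
    have q1 : 2 * Real.pi * (2 * s) = 2 * (2 * Real.pi * s) := by ring
    have q2 : (2 : ℝ) ^ ((n : ℝ) / 2) * 2 ^ (-(n : ℝ) / 2) = 1 := by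
      rw [← Real.rpow_add two_pos, ← Real.rpow_zero 2]; congr 1; ring
    rw [q1, Real.mul_rpow (x := 2) (y := 2 * Real.pi * s) (by norm_num) (by positivity),
      mul_assoc, ← Real.exp_add]
    have q3 : -‖y‖ ^ 2 / (2 * s) + Q = -‖y‖ ^ 2 / (2 * (2 * s)) := by
      rw [hQ]; field_simp; ring
    rw [q3]
    calc _ = (2 : ℝ) ^ ((n : ℝ) / 2) * 2 ^ (-(n : ℝ) / 2) *
          ((2 * Real.pi * s) ^ (-(n : ℝ) / 2) * Real.exp (-‖y‖ ^ 2 / (2 * (2 * s)))) := by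
          rw [q2, one_mul]
      _ = _ := by ring
  have hG := Gk_pos (n := n) hs y
  have e4 : Gk n s (y - h) + Gk n s (y + h) - 2 * Gk n s y =
      2 * Gk n s y * (Real.exp (-b) * Real.cosh a - 1) := by
    rw [e1, e2, Real.cosh_eq]; ring
  have hb0 : 0 ≤ b := by positivity
  have hQ0 : 0 ≤ Q := by positivity
  have ha2 : a ^ 2 / 2 ≤ (‖h‖ ^ 2 / s) * (‖y‖ ^ 2 / (2 * s)) := by
    have h1 : ⟪y, h⟫ ^ 2 ≤ ‖y‖ ^ 2 * ‖h‖ ^ 2 := by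
      rw [← mul_pow]
      exact sq_le_sq' (by have := abs_le.1 (abs_real_inner_le_norm y h); linarith [this.1])
        (real_inner_le_norm y h)
    rw [ha]
    calc (⟪y, h⟫ / s) ^ 2 / 2 = ⟪y, h⟫ ^ 2 / (2 * s ^ 2) := by field_simp
      _ ≤ ‖y‖ ^ 2 * ‖h‖ ^ 2 / (2 * s ^ 2) := by gcongr
      _ = _ := by field_simp
  have haQ : a ^ 2 / 2 ≤ Q := by
    refine ha2.trans ?_
    have h1 : ‖h‖ ^ 2 / s ≤ 1 / 2 := by rw [div_le_iff₀ hs]; linarith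
    calc _ ≤ 1 / 2 * (‖y‖ ^ 2 / (2 * s)) := mul_le_mul_of_nonneg_right h1 (by positivity)
      _ = Q := by rw [hQ]; ring
  have hB : |Real.exp (-b) * Real.cosh a - 1| ≤
      (‖h‖ ^ 2 / s) * (1 + ‖y‖ ^ 2 / (2 * s)) * Real.exp Q := by
    have hexpQ : 1 ≤ Real.exp Q := Real.one_le_exp hQ0
    have hS : 0 ≤ ‖h‖ ^ 2 / s := by positivity
    have hT : 0 ≤ ‖y‖ ^ 2 / (2 * s) := by positivity
    rw [abs_le]
    constructor
    · have h1 : 1 - b ≤ Real.exp (-b) := by have := Real.add_one_le_exp (-b); linarith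
      have h2 : Real.exp (-b) ≤ Real.exp (-b) * Real.cosh a :=
        le_mul_of_one_le_right (Real.exp_pos _).le (Real.one_le_cosh a)
      have h3 : b ≤ ‖h‖ ^ 2 / s := by
        rw [hb]
        exact div_le_div_of_nonneg_left (by positivity) hs (by linarith)
      have h4 : ‖h‖ ^ 2 / s ≤ (‖h‖ ^ 2 / s) * (1 + ‖y‖ ^ 2 / (2 * s)) * Real.exp Q := by
        rw [mul_assoc]
        exact le_mul_of_one_le_right hS (one_le_mul_of_one_le_of_one_le (by linarith) hexpQ)
      linarith
    · have h1 : Real.exp (-b) * Real.cosh a ≤ Real.exp (a ^ 2 / 2) := by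
        calc _ ≤ 1 * Real.cosh a := mul_le_mul_of_nonneg_right
              (Real.exp_le_one_iff.2 (by linarith)) (Real.cosh_pos a).le
          _ ≤ _ := by rw [one_mul]; exact Real.cosh_le_exp_half_sq a
      set c := a ^ 2 / 2 with hc
      have hc0 : 0 ≤ c := by positivity
      have h2 : Real.exp c - 1 ≤ c * Real.exp c := by
        have := Real.add_one_le_exp (-c)
        have h3 : Real.exp (-c) * Real.exp c = 1 := by rw [← Real.exp_add]; simp
        nlinarith [Real.exp_pos c]
      have h3 : c * Real.exp c ≤ (‖h‖ ^ 2 / s) * (1 + ‖y‖ ^ 2 / (2 * s)) * Real.exp Q := by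
        refine mul_le_mul ?_ (Real.exp_le_exp.2 haQ) (Real.exp_pos _).le (by positivity)
        rw [mul_add, mul_one]; linarith
      linarith
  rw [e4, abs_mul, abs_of_nonneg (by positivity : 0 ≤ 2 * Gk n s y)]
  calc _ ≤ 2 * Gk n s y * ((‖h‖ ^ 2 / s) * (1 + ‖y‖ ^ 2 / (2 * s)) * Real.exp Q) :=
        mul_le_mul_of_nonneg_left hB (by positivity)
    _ = 2 * (‖h‖ ^ 2 / s) * (1 + ‖y‖ ^ 2 / (2 * s)) * (Gk n s y * Real.exp Q) := by ring
    _ = _ := by rw [e3]; ring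

lemma second_diff {p A s : ℝ} (hp : 0 < p) (hp2 : p < 2) (hA : 0 ≤ A)
    {u : EuclideanSpace ℝ (Fin n) → ℝ} (hu : Gr n p A u) (hs : 0 < s)
    (x h : EuclideanSpace ℝ (Fin n)) (hsh : 2 * ‖h‖ ^ 2 ≤ s) :
    |HU n u s (x + h) + HU n u s (x - h) - 2 * HU n u s x| ≤
      (4 * A * (1 + ‖x‖ ^ p)) * (2 * 2 ^ ((n : ℝ) / 2) * ‖h‖ ^ 2 / s) *
        ((1 + (2 * s) ^ (p / 2)) * Mo n p) := by
  have i0 := hu.integrable hp hp2 hA x hs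
  have key : ∀ k : EuclideanSpace ℝ (Fin n), Integrable (fun y => u (x + y) * Gk n s (y - k)) ∧
      HU n u s (x + k) = ∫ y, u (x + y) * Gk n s (y - k) := fun k => by
    have i1 := (hu.integrable hp hp2 hA (x + k) hs).comp_sub_right k
    have e : ∀ y, u (x + k + (y - k)) * Gk n s (y - k) = u (x + y) * Gk n s (y - k) := fun y => by
      congr 2; abel
    simp only [e] at i1
    refine ⟨i1, ?_⟩
    unfold HU
    rw [← integral_sub_right_eq_self (fun y => u (x + k + y) * Gk n s y) k]
    simp only [e]
  obtain ⟨i1, e1⟩ := key h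
  obtain ⟨i2, e2⟩ := key (-h)
  rw [← sub_eq_add_neg] at e2
  simp only [sub_neg_eq_add] at i2 e2
  have e3 : HU n u s (x + h) + HU n u s (x - h) - 2 * HU n u s x =
      ∫ y, u (x + y) * (Gk n s (y - h) + Gk n s (y + h) - 2 * Gk n s y) := by
    rw [e1, e2, HU, ← integral_const_mul, ← integral_add i1 i2,
      ← integral_sub (f := fun y => u (x + y) * Gk n s (y - h) + u (x + y) * Gk n s (y + h))
        (i1.add i2) (i0.const_mul 2)]
    congr 1; ext y; ring
  have hI := (moment_integrable (n := n) hp hp2 (t := 2 * s) (by positivity)).const_mul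
    ((4 * A * (1 + ‖x‖ ^ p)) * (2 * 2 ^ ((n : ℝ) / 2) * ‖h‖ ^ 2 / s))
  rw [e3, ← Real.norm_eq_abs]
  refine (norm_integral_le_of_norm_le hI (Eventually.of_forall fun y => ?_)).trans ?_
  · rw [norm_mul, Real.norm_eq_abs, Real.norm_eq_abs]
    calc _ ≤ ((4 * A * (1 + ‖x‖ ^ p)) * (1 + ‖y‖ ^ p)) *
          ((2 * 2 ^ ((n : ℝ) / 2) * ‖h‖ ^ 2 / s) * ((1 + ‖y‖ ^ 2 / (2 * s)) * Gk n (2 * s) y)) :=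
          mul_le_mul (hu.shift hp hp2 hA x y) (second_diff_pt hs h y hsh) (abs_nonneg _)
            (by positivity)
      _ = _ := by ring
  · rw [integral_const_mul]
    exact mul_le_mul_of_nonneg_left (moment_le hp hp2 (by positivity)) (by positivity)

lemma midpoint_eq {p A : ℝ} (hp : 0 < p) (hp2 : p < 2) (hA : 0 ≤ A)
    {u : EuclideanSpace ℝ (Fin n) → ℝ} (hu : Gr n p A u)
    (hst : ∀ s, 0 < s → ∀ x, HU n u s x = u x) (x h : EuclideanSpace ℝ (Fin n)) :
    u (x + h) + u (x - h) = 2 * u x := by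
  set c := (4 * A * (1 + ‖x‖ ^ p)) * (2 * 2 ^ ((n : ℝ) / 2) * ‖h‖ ^ 2) * Mo n p with hc
  have hlim : Tendsto (fun s : ℝ => c * (s⁻¹ + 2 ^ (p / 2) * s ^ (-(1 - p / 2)))) atTop (𝓝 0) := by
    have h1 := (tendsto_rpow_neg_atTop (y := 1 - p / 2) (by linarith)).const_mul
      ((2 : ℝ) ^ (p / 2))
    have := (tendsto_inv_atTop_zero.add h1).const_mul c
    simpa using this
  have hle : |u (x + h) + u (x - h) - 2 * u x| ≤ 0 := by
    refine ge_of_tendsto hlim ?_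
    filter_upwards [eventually_gt_atTop 0, eventually_ge_atTop (2 * ‖h‖ ^ 2)] with s hs hsh
    have := second_diff hp hp2 hA hu hs x h hsh
    rw [hst s hs, hst s hs, hst s hs] at this
    refine this.trans (le_of_eq ?_)
    rw [Real.mul_rpow two_pos.le hs.le, neg_sub, Real.rpow_sub_one hs.ne', hc]
    field_simp
  have := abs_nonpos_iff.1 hle
  linarith

lemma affine_of_midpoint {u : EuclideanSpace ℝ (Fin n) → ℝ} (hu : Continuous u)
    (h : ∀ x h, u (x + h) + u (x - h) = 2 * u x) :
    ∃ (p : EuclideanSpace ℝ (Fin n)) (c : ℝ), ∀ x, u x = ⟪p, x⟫ + c := by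
  have hd : ∀ x, u (x + x) + u 0 = 2 * u x := fun x => by simpa using h x x
  have hadd : ∀ a b, u (a + b) - u 0 = (u a - u 0) + (u b - u 0) := fun a b => by
    have h1 := h ((1 / 2 : ℝ) • (a + b)) ((1 / 2 : ℝ) • (a - b))
    have h2 := hd ((1 / 2 : ℝ) • (a + b))
    have q1 : (1 / 2 : ℝ) • (a + b) + (1 / 2 : ℝ) • (a - b) = a := by module
    have q2 : (1 / 2 : ℝ) • (a + b) - (1 / 2 : ℝ) • (a - b) = b := by module
    have q3 : (1 / 2 : ℝ) • (a + b) + (1 / 2 : ℝ) • (a + b) = a + b := by module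
    rw [q1, q2] at h1
    rw [q3] at h2
    linarith
  let f : EuclideanSpace ℝ (Fin n) →+ ℝ :=
    { toFun := fun x => u x - u 0, map_zero' := by simp, map_add' := hadd }
  let g := f.toRealLinearMap (by change Continuous (fun x => u x - u 0); fun_prop)
  refine ⟨(InnerProductSpace.toDual ℝ _).symm g, u 0, fun x => ?_⟩
  rw [InnerProductSpace.toDual_symm_apply]
  change u x = (u x - u 0) + u 0
  ring

end FracLiou

/-- Liouville theorem for viscosity solutions of the fractional Laplacian, `σ > 1/2`:
a continuous viscosity solution of `(−Δ)^σ u = 0` in `ℝⁿ` growing at most like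
`1 + |x|^{1+α}`, `0 < α < 2σ − 1`, is affine. -/
theorem fracLap_liouville (n : ℕ) (hn : 1 ≤ n) (σ α : ℝ)
    (hσ : σ ∈ Set.Ioo (1/2 : ℝ) 1) (hα : 0 < α) (hα' : α < 2 * σ - 1)
    (u : EuclideanSpace ℝ (Fin n) → ℝ) (hu : Continuous u)
    (hgrowth : ∀ x, |u x| ≤ 1 + ‖x‖ ^ (1 + α))
    -- viscosity supersolution: at points touched from below, the principal value
    -- exists and is `≤ 0`
    (hsuper : ∀ y φ, TouchesBelow n u φ y →
      ∃ L : ℝ, Tendsto (truncatedFracLap n σ u y) (nhdsWithin 0 (Set.Ioi 0)) (𝓝 L) ∧ L ≤ 0)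
    -- viscosity subsolution: at points touched from above, the principal value
    -- exists and is `≥ 0`
    (hsub : ∀ y φ, TouchesAbove n u φ y →
      ∃ L : ℝ, Tendsto (truncatedFracLap n σ u y) (nhdsWithin 0 (Set.Ioi 0)) (𝓝 L) ∧ 0 ≤ L) :
    ∃ (p : EuclideanSpace ℝ (Fin n)) (c : ℝ), ∀ x, u x = ⟪p, x⟫ + c := by
  obtain ⟨h1, h2⟩ := hσ
  have hp : 0 < 1 + α := by linarith
  have hp2 : 1 + α < 2 := by linarith
  have hs0 : 0 < σ := by linarith
  have hpσ : 1 + α < 2 * σ := by linarith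
  have huG : FracLiou.Gr n (1 + α) 1 u := ⟨hu.measurable, fun x => by simpa using hgrowth x⟩
  refine FracLiou.affine_of_midpoint hu fun x h =>
    FracLiou.midpoint_eq hp hp2 zero_le_one huG (fun s hs x => ?_) x h
  exact FracLiou.stationary hp hp2 h2 hpσ zero_le_one hu huG x
    (fun s hs => FracLiou.heat_eq hp hp2 hs0 h2 hpσ hs hu hgrowth hsuper hsub x) hs
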